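/- Let N ≥ 2. There exists a one-parameter family Ω(t) of open bounded sets of ℝ^N smoothly converging to the unit ball as t → 0, with δP(Ω(t)) > 0 and δλ(Ω(t)) > 0 for all small t > 0, such that lim_{t→0} δP(Ω(t))/δλ(Ω(t)) = C_N; that is, the constant C_N in the lower bound liminf_{t→0} δP(Ω(t))/δλ(Ω(t)) ≥ C_N is optimal. -/

import Mathlib

open MeasureTheory Metric Set Filter Topology
open scoped RealInnerProductSpace

noncomputable section

abbrev euc (N : ℕ) := EuclideanSpace ℝ (Fin N)

/-- Bessel function of the first kind of order `ν`, via its power series. -/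
def besselJ (ν : ℝ) (x : ℝ) : ℝ :=
  ∑' m : ℕ, ((-1 : ℝ) ^ m / (m.factorial * Real.Gamma (m + ν + 1))) *
    (x / 2) ^ (2 * (m : ℝ) + ν)

/-- First positive zero of the Bessel function `J_ν`. -/
def besselJzero (ν : ℝ) : ℝ := sInf {x : ℝ | 0 < x ∧ besselJ ν x = 0}

/-- Volume of the unit ball of `ℝ^N`. -/
def ballVol (N : ℕ) : ℝ := (volume (ball (0 : euc N) 1)).toReal

/-- Perimeter: `(N-1)`-dimensional Hausdorff measure of the topological boundary. -/
def perim (N : ℕ) (Ω : Set (euc N)) : ℝ := (μH[(N : ℝ) - 1] (frontier Ω)).toReal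

/-- First Dirichlet Laplacian eigenvalue: infimum of Rayleigh quotients over nonzero
smooth functions compactly supported in `Ω`. -/
def firstEigenvalue (N : ℕ) (Ω : Set (euc N)) : ℝ :=
  sInf { R : ℝ | ∃ u : euc N → ℝ, ContDiff ℝ (⊤ : ℕ∞) u ∧ HasCompactSupport u ∧
    tsupport u ⊆ Ω ∧ u ≠ 0 ∧
    R = (∫ x, ‖gradient u x‖ ^ 2) / (∫ x, u x ^ 2) }

/-- Radius of the ball `Ω♯` with the same Lebesgue measure as `Ω`. -/
def sharpRadius (N : ℕ) (Ω : Set (euc N)) : ℝ :=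
  ((volume Ω).toReal / ballVol N) ^ ((1 : ℝ) / N)

/-- Isoperimetric deficit `δP(Ω) = Per(Ω)/Per(Ω♯) - 1`. -/
def perDeficit (N : ℕ) (Ω : Set (euc N)) : ℝ :=
  perim N Ω / perim N (ball (0 : euc N) (sharpRadius N Ω)) - 1

/-- Faber-Krahn deficit `δλ(Ω) = λ(Ω)/λ(Ω♯) - 1`. -/
def fkDeficit (N : ℕ) (Ω : Set (euc N)) : ℝ :=
  firstEigenvalue N Ω / firstEigenvalue N (ball (0 : euc N) (sharpRadius N Ω)) - 1

/-- A one-parameter family `Ω t` of subsets of `ℝ^N` smoothly converges to `Ω₀` as `t → 0`. -/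
structure SmoothlyConverges (N : ℕ) (Ω : ℝ → Set (euc N)) (Ω₀ : Set (euc N)) where
  δ : ℝ
  δ_pos : 0 < δ
  Φ : ℝ → euc N → euc N
  Φinv : ℝ → euc N → euc N
  left_inv : ∀ t ∈ Ico (0 : ℝ) δ, Function.LeftInverse (Φinv t) (Φ t)
  right_inv : ∀ t ∈ Ico (0 : ℝ) δ, Function.RightInverse (Φinv t) (Φ t)
  smooth_x : ∀ t ∈ Ico (0 : ℝ) δ, ContDiff ℝ (⊤ : ℕ∞) (Φ t)
  smooth_x_inv : ∀ t ∈ Ico (0 : ℝ) δ, ContDiff ℝ (⊤ : ℕ∞) (Φinv t)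
  smooth_t : ∀ x, ContDiffOn ℝ (⊤ : ℕ∞) (fun t => Φ t x) (Ico (0 : ℝ) δ)
  smooth_t_inv : ∀ x, ContDiffOn ℝ (⊤ : ℕ∞) (fun t => Φinv t x) (Ico (0 : ℝ) δ)
  init : Ω 0 = Ω₀
  image : ∀ t ∈ Ico (0 : ℝ) δ, Ω t = Φ t '' Ω₀

/-- The Laplacian of `f : ℝ^N → ℝ`, as the trace of the second derivative. -/
def lap (N : ℕ) (f : euc N → ℝ) (x : euc N) : ℝ :=
  ∑ i : Fin N,
    iteratedFDeriv ℝ 2 f x ![EuclideanSpace.single i 1, EuclideanSpace.single i 1]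

/-- The divergence of a vector field on `ℝ^N`. -/
def diver (N : ℕ) (f : euc N → euc N) (x : euc N) : ℝ :=
  ∑ i : Fin N, ⟪fderiv ℝ f x (EuclideanSpace.single i 1), (EuclideanSpace.single i 1 : euc N)⟫

/-- The constant `G_N`: the modulus of the gradient on the boundary of the normalized first
eigenfunction of the unit ball. -/
def GN (N : ℕ) : ℝ :=
  (besselJzero ((N : ℝ) / 2 - 1)) ^ 2 *
      deriv (besselJ ((N : ℝ) / 2 - 1)) (besselJzero ((N : ℝ) / 2 - 1)) /
    Real.sqrt (N * ballVol N *
      ∫ r in (0 : ℝ)..(besselJzero ((N : ℝ) / 2 - 1)), r * besselJ ((N : ℝ) / 2 - 1) r ^ 2)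

/-- The optimal constant `C_N` of the paper. -/
def CN (N : ℕ) : ℝ :=
  (N * (N + 1) *
      ∫ r in (0 : ℝ)..(besselJzero ((N : ℝ) / 2 - 1)), r * besselJ ((N : ℝ) / 2 - 1) r ^ 2) /
    (2 * (besselJzero ((N : ℝ) / 2 - 1) *
        deriv (besselJ ((N : ℝ) / 2 - 1)) (besselJzero ((N : ℝ) / 2 - 1))) ^ 2 *
      ((besselJzero ((N : ℝ) / 2 - 1)) ^ 2 - N))

end

/-- Coefficients of the entire Bessel-Clifford function. -/
noncomputable def cB (μ : ℝ) (m : ℕ) : ℝ := (-1 : ℝ) ^ m / (m.factorial * Real.Gamma (m + μ + 1))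

/-- The entire function with `J_μ(r) = (r/2)^μ gB μ (r²/4)`. -/
noncomputable def gB (μ z : ℝ) : ℝ := ∑' m : ℕ, cB μ m * z ^ m

lemma gamma_lower {μ : ℝ} (hμ : 0 ≤ μ) (m : ℕ) :
    Real.Gamma (μ + 1) ≤ Real.Gamma (m + μ + 1) := by
  induction m with
  | zero => simp
  | succ k ih =>
    have h1 : ((k + 1 : ℕ) : ℝ) + μ + 1 = (k + μ + 1) + 1 := by push_cast; ring
    rw [h1, Real.Gamma_add_one (s := k + μ + 1) (by positivity)]
    have : 0 < Real.Gamma (k + μ + 1) := Real.Gamma_pos_of_pos (by positivity)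
    have h2 : (0:ℝ) ≤ k + μ := by positivity
    nlinarith

lemma cB_abs_le {μ : ℝ} (hμ : 0 ≤ μ) (m : ℕ) :
    |cB μ m| ≤ (Real.Gamma (μ + 1))⁻¹ * (1 / m.factorial) := by
  have h0 : 0 < Real.Gamma (μ + 1) := Real.Gamma_pos_of_pos (by positivity)
  have h1 := gamma_lower hμ m
  have h2 : (0:ℝ) < m.factorial := by positivity
  unfold cB
  rw [abs_div, abs_pow, abs_neg, abs_one, one_pow, abs_of_pos (by positivity), one_div, mul_inv,
    one_div, mul_comm]
  gcongr

lemma cB_summable {μ : ℝ} (hμ : 0 ≤ μ) (z : ℝ) : Summable (fun m => cB μ m * z ^ m) := by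
  apply Summable.of_norm_bounded
    (((Real.summable_pow_div_factorial |z|)).mul_left ((Real.Gamma (μ + 1))⁻¹))
  intro m
  rw [norm_mul, norm_pow, Real.norm_eq_abs, Real.norm_eq_abs]
  calc _ ≤ (Real.Gamma (μ + 1))⁻¹ * (1 / m.factorial) * |z| ^ m := by
        gcongr; exact cB_abs_le hμ m
    _ = _ := by ring

lemma cB_succ {μ : ℝ} (m : ℕ) : cB μ (m + 1) * ((m : ℝ) + 1) = - cB (μ + 1) m := by
  unfold cB
  rw [Nat.factorial_succ]
  have : ((m + 1 : ℕ) : ℝ) + μ + 1 = m + (μ + 1) + 1 := by push_cast; ring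
  rw [this, pow_succ]
  push_cast
  have h : ((m : ℝ) + 1) ≠ 0 := by positivity
  have h' : ((m.factorial : ℝ)) ≠ 0 := by positivity
  by_cases hG : Real.Gamma (m + (μ + 1) + 1) = 0
  · simp [hG]
  field_simp

lemma gB_hasDerivAt {μ : ℝ} (hμ : 0 ≤ μ) (z : ℝ) :
    HasDerivAt (gB μ) (-(gB (μ + 1) z)) z := by
  set R := |z| + 1 with hR
  have hR0 : 0 < R := by positivity
  have hu : Summable (fun m : ℕ => (Real.Gamma (μ + 1))⁻¹ * (1 / m.factorial) * (m * R ^ (m - 1))) := by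
    rw [← summable_nat_add_iff 1]
    apply (((Real.summable_pow_div_factorial R)).mul_left ((Real.Gamma (μ + 1))⁻¹)).congr
    intro m
    rw [Nat.factorial_succ]
    push_cast
    have h : ((m : ℝ) + 1) ≠ 0 := by positivity
    field_simp
  have key := hasDerivAt_tsum_of_isPreconnected (𝕜 := ℝ) (t := ball (0:ℝ) R)
    (g := fun m y => cB μ m * y ^ m) (g' := fun m y => cB μ m * (m * y ^ (m - 1))) hu
    isOpen_ball (convex_ball _ _).isPreconnected
    (fun m y _ => (hasDerivAt_pow m y).const_mul _)
    (fun m y hy => by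
      rw [norm_mul, norm_mul, norm_pow, Real.norm_eq_abs, Real.norm_eq_abs, Real.norm_eq_abs]
      have hy' : |y| ≤ R := by simpa using (mem_ball_zero_iff.1 hy).le
      have := cB_abs_le hμ m
      rw [Nat.abs_cast]
      gcongr)
    (mem_ball_self hR0) (cB_summable hμ 0) (y := z) (by simp [hR])
  refine key.congr_deriv ?_
  symm
  unfold gB
  rw [← tsum_neg]
  have hs : Summable (fun m : ℕ => cB μ m * (m * z ^ (m - 1))) := by
    rw [← summable_nat_add_iff 1]
    refine ((cB_summable (μ := μ + 1) (by positivity) z).neg).congr (fun m => ?_)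
    simp only [Nat.add_sub_cancel, Nat.cast_add, Nat.cast_one]
    rw [← mul_assoc, cB_succ]; ring
  rw [hs.tsum_eq_zero_add]
  simp only [Nat.cast_zero, zero_mul, mul_zero, zero_add, Nat.add_sub_cancel, Nat.cast_add,
    Nat.cast_one]
  congr 1; ext m
  rw [← mul_assoc, cB_succ]; ring

lemma gB_contDiff {n : ℕ} : ∀ {μ : ℝ}, 0 ≤ μ → ContDiff ℝ n (gB μ) := by
  induction n with
  | zero =>
    intro μ hμ
    exact contDiff_zero.2 (Differentiable.continuous fun z => (gB_hasDerivAt hμ z).differentiableAt)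
  | succ k ih =>
    intro μ hμ
    have : ((k + 1 : ℕ) : WithTop ℕ∞) = (k : WithTop ℕ∞) + 1 := by push_cast; rfl
    rw [this, contDiff_succ_iff_deriv]
    refine ⟨fun z => (gB_hasDerivAt hμ z).differentiableAt, by simp, ?_⟩
    have : deriv (gB μ) = fun z => -(gB (μ + 1) z) := funext fun z => (gB_hasDerivAt hμ z).deriv
    rw [this]
    exact (ih (by positivity)).neg

lemma gB_smooth {μ : ℝ} (hμ : 0 ≤ μ) : ContDiff ℝ (⊤ : ℕ∞) (gB μ) :=
  contDiff_infty.2 fun _ => gB_contDiff hμ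

lemma gB_rec {μ : ℝ} (hμ : 0 ≤ μ) (z : ℝ) :
    gB μ z = (μ + 1) * gB (μ + 1) z - z * gB (μ + 2) z := by
  have hs0 := cB_summable hμ z
  have hs1 := cB_summable (μ := μ + 1) (by positivity) z
  have hs2 := cB_summable (μ := μ + 2) (by positivity) z
  have e1 : (gB μ z) = cB μ 0 + ∑' m : ℕ, cB μ (m + 1) * z ^ (m + 1) := by
    unfold gB; rw [hs0.tsum_eq_zero_add]; simp
  have e2 : (gB (μ + 1) z) = cB (μ + 1) 0 + ∑' m : ℕ, cB (μ + 1) (m + 1) * z ^ (m + 1) := by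
    unfold gB; rw [hs1.tsum_eq_zero_add]; simp
  rw [e1, e2]
  unfold gB
  have h0 : cB μ 0 = (μ + 1) * cB (μ + 1) 0 := by
    unfold cB
    have : Real.Gamma (μ + 1 + 1) = (μ + 1) * Real.Gamma (μ + 1) :=
      Real.Gamma_add_one (by positivity)
    have h0 : 0 < Real.Gamma (μ + 1) := Real.Gamma_pos_of_pos (by positivity)
    simp [this]
    field_simp
  have hs1' := (summable_nat_add_iff 1).2 hs1
  rw [mul_add, ← h0, ← tsum_mul_left, ← tsum_mul_left, add_sub_assoc,
    ← Summable.tsum_sub (hs1'.mul_left _) (hs2.mul_left _)]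
  congr 2
  ext m
  have hG : 0 < Real.Gamma (m + μ + 2) := Real.Gamma_pos_of_pos (by positivity)
  have hG3 : Real.Gamma (m + μ + 3) = (m + μ + 2) * Real.Gamma (m + μ + 2) := by
    rw [← Real.Gamma_add_one (by positivity)]; congr 1; ring
  have : cB μ (m + 1) = (μ + 1) * cB (μ + 1) (m + 1) - cB (μ + 2) m := by
    unfold cB
    have a1 : ((m + 1 : ℕ) : ℝ) + μ + 1 = m + μ + 2 := by push_cast; ring
    have a2 : ((m + 1 : ℕ) : ℝ) + (μ + 1) + 1 = m + μ + 3 := by push_cast; ring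
    have a3 : (m : ℝ) + (μ + 2) + 1 = m + μ + 3 := by ring
    rw [a1, a2, a3, hG3, Nat.factorial_succ]
    push_cast
    have h : ((m : ℝ) + 1) ≠ 0 := by positivity
    have h' : ((m.factorial : ℝ)) ≠ 0 := by positivity
    have h'' : ((m : ℝ) + μ + 2) ≠ 0 := by positivity
    field_simp
    ring
  rw [this]; ring

lemma gB_zero {μ : ℝ} (hμ : 0 ≤ μ) : 0 < gB μ 0 := by
  unfold gB
  rw [tsum_eq_single 0 (by intro b hb; simp [hb])]
  have h0 : 0 < Real.Gamma (μ + 1) := Real.Gamma_pos_of_pos (by positivity)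
  simp [cB]; exact h0

lemma gB_cont {μ : ℝ} (hμ : 0 ≤ μ) : Continuous (gB μ) :=
  Differentiable.continuous fun z => (gB_hasDerivAt hμ z).differentiableAt

lemma gB_pos_succ {μ Z : ℝ} (hμ : 0 ≤ μ) (h : ∀ z ∈ Ioo 0 Z, 0 < gB μ z) :
    ∀ z ∈ Icc 0 Z, 0 < gB (μ + 1) z := by
  intro z hz
  rcases hz.1.eq_or_lt with rfl | hz0
  · exact gB_zero (by positivity)
  have hmono : StrictMonoOn (fun z : ℝ => z ^ (μ + 1) * gB (μ + 1) z) (Icc 0 Z) := by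
    apply strictMonoOn_of_deriv_pos (convex_Icc _ _)
    · refine ContinuousOn.mul ?_ (gB_cont (by positivity)).continuousOn
      exact (Real.continuous_rpow_const (by positivity)).continuousOn
    · intro y hy
      rw [interior_Icc] at hy
      have hd := (Real.hasDerivAt_rpow_const (x := y) (p := μ + 1) (Or.inl hy.1.ne')).mul
        (gB_hasDerivAt (μ := μ + 1) (by positivity) y)
      have hd' := hd.deriv
      have hE : (fun z : ℝ => z ^ (μ + 1) * gB (μ + 1) z) =
        (fun x : ℝ => x ^ (μ + 1)) * gB (μ + 1) := rfl
      rw [hE, hd']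
      have e : y ^ (μ + 1) = y ^ μ * y := by rw [Real.rpow_add hy.1, Real.rpow_one]
      have r := gB_rec hμ y
      have e2 : μ + 1 - 1 = μ := by ring
      have e3 : μ + 1 + 1 = μ + 2 := by ring
      rw [e2, e3, e]
      have hp := Real.rpow_pos_of_pos hy.1 μ
      have := h y hy
      have : 0 < y ^ μ * gB μ y := by positivity
      rw [r] at this
      linarith
  have := hmono (left_mem_Icc.2 (hz.1.trans hz.2)) hz hz0
  simp only [Real.zero_rpow (by positivity : μ + 1 ≠ 0), zero_mul] at this
  exact (mul_pos_iff_of_pos_left (Real.rpow_pos_of_pos hz0 _)).1 this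

lemma gB_exists_zero {μ : ℝ} (hμ : 0 ≤ μ) :
    ∃ z0 : ℝ, 0 < z0 ∧ gB μ z0 = 0 ∧ ∀ z ∈ Ico 0 z0, 0 < gB μ z := by
  have hex : ∃ z : ℝ, 0 < z ∧ gB μ z ≤ 0 := by
    by_contra! hcon
    set Z := (μ + 1) * (μ + 2)
    have hZ : 0 < Z := by positivity
    have h1 := gB_pos_succ hμ (Z := Z) (fun z hz => hcon z hz.1)
    have h2 := gB_pos_succ (μ := μ + 1) (by positivity) (Z := Z)
      (fun z hz => h1 z (Ioo_subset_Icc_self hz))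
    have h3 := gB_pos_succ (μ := μ + 1 + 1) (by positivity) (Z := Z)
      (fun z hz => h2 z (Ioo_subset_Icc_self hz))
    have hm : Z ∈ Icc 0 Z := ⟨hZ.le, le_rfl⟩
    have a0 := hcon Z hZ
    have a2 := h2 Z hm
    have a3 := h3 Z hm
    have r0 := gB_rec hμ Z
    have r1 := gB_rec (μ := μ + 1) (by positivity) Z
    have e2 : μ + 1 + 1 = μ + 2 := by ring
    have e3 : μ + 1 + 2 = μ + 2 + 1 := by ring
    rw [e2] at a2 a3 r1
    rw [e3] at r1
    have : gB μ Z = - (μ + 1) * (Z * gB (μ + 2 + 1) Z) := by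
      rw [r0, r1]; simp only [Z]; ring
    have : 0 < (μ + 1) * (Z * gB (μ + 2 + 1) Z) := by positivity
    linarith
  obtain ⟨z1, hz1, hle⟩ := hex
  set S := {z : ℝ | 0 ≤ z ∧ gB μ z ≤ 0} with hS
  have hSc : IsClosed S := (isClosed_Ici (a := (0:ℝ))).inter
    (isClosed_le (gB_cont hμ) continuous_const)
  have hSn : S.Nonempty := ⟨z1, hz1.le, hle⟩
  have hSb : BddBelow S := ⟨0, fun z hz => hz.1⟩
  have hmem := hSc.csInf_mem hSn hSb
  set z0 := sInf S
  have hlt : ∀ z ∈ Ico 0 z0, 0 < gB μ z := by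
    intro z hz
    by_contra! hc
    exact absurd (csInf_le hSb ⟨hz.1, hc⟩) (not_le.2 hz.2)
  have hz0 : 0 < z0 := by
    rcases hmem.1.eq_or_lt with h | h
    · have := hmem.2; rw [← h] at this; exact absurd (gB_zero hμ) (not_lt.2 this)
    · exact h
  refine ⟨z0, hz0, le_antisymm hmem.2 ?_, hlt⟩
  have : Tendsto (gB μ) (𝓝[<] z0) (𝓝 (gB μ z0)) := ((gB_cont hμ).tendsto z0).mono_left inf_le_left
  refine ge_of_tendsto this ?_
  filter_upwards [Ioo_mem_nhdsLT hz0] with z hz using (hlt z ⟨hz.1.le, hz.2⟩).le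

lemma besselJ_eq {ν x : ℝ} (hx : 0 < x) : besselJ ν x = (x / 2) ^ ν * gB ν (x ^ 2 / 4) := by
  unfold besselJ gB
  rw [← tsum_mul_left]
  congr 1; ext m
  rw [Real.rpow_add (by positivity), show (x ^ 2 / 4) = (x / 2) ^ 2 by ring, ← pow_mul]
  rw [show (2 * (m:ℝ)) = ((2 * m : ℕ) : ℝ) by push_cast; ring, Real.rpow_natCast]
  unfold cB; ring

lemma zero_ge {μ z0 : ℝ} (hμ : 0 ≤ μ) (hz0 : 0 < z0) (h0 : gB μ z0 = 0)
    (hpos : ∀ z ∈ Ico 0 z0, 0 < gB μ z) : μ + 1 ≤ z0 := by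
  have h1 := gB_pos_succ hμ (Z := z0) (fun z hz => hpos z ⟨hz.1.le, hz.2⟩)
  have h2 := gB_pos_succ (μ := μ + 1) (by positivity) (Z := z0)
      (fun z hz => h1 z (Ioo_subset_Icc_self hz))
  have hanti : AntitoneOn (gB (μ + 1)) (Icc 0 z0) := by
    apply antitoneOn_of_deriv_nonpos (convex_Icc _ _) (gB_cont (by positivity)).continuousOn
    · intro x _; exact (gB_hasDerivAt (by positivity) x).differentiableAt.differentiableWithinAt
    · intro x hx
      rw [interior_Icc] at hx
      rw [(gB_hasDerivAt (by positivity) x).deriv]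
      have := h2 x (Ioo_subset_Icc_self hx)
      linarith
  obtain ⟨c, hc, hc'⟩ := exists_hasDerivAt_eq_slope (gB μ) (fun z => -(gB (μ + 1) z)) hz0
    (gB_cont hμ).continuousOn (fun x _ => gB_hasDerivAt hμ x)
  have hle := hanti (left_mem_Icc.2 hz0.le) (Ioo_subset_Icc_self hc) hc.1.le
  have r := gB_rec hμ 0
  simp only [zero_mul, sub_zero] at r
  rw [h0, r] at hc'
  have hp := gB_zero (μ := μ + 1) (by positivity)
  have : gB (μ + 1) c * z0 = (μ + 1) * gB (μ + 1) 0 := by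
    rw [sub_zero, eq_div_iff hz0.ne'] at hc'; linarith
  by_contra! hcon
  nlinarith

lemma bessel_pack (N : ℕ) (hN : 2 ≤ N) : ∃ j : ℝ, 0 < j ∧ gB ((N:ℝ) / 2 - 1) (j ^ 2 / 4) = 0 ∧
    (∀ z ∈ Ico 0 (j ^ 2 / 4), 0 < gB ((N:ℝ) / 2 - 1) z) ∧
    (∀ z ∈ Icc 0 (j ^ 2 / 4), 0 < gB ((N:ℝ) / 2) z) ∧
    (N : ℝ) < j ^ 2 ∧ CN N = N * (N + 1) / (4 * (j ^ 2 - N)) := by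
  set ν : ℝ := (N:ℝ) / 2 - 1 with hν
  have hN' : (2:ℝ) ≤ N := by exact_mod_cast hN
  have hν0 : 0 ≤ ν := by rw [hν]; linarith
  obtain ⟨z0, hz0, hg, hpos⟩ := gB_exists_zero hν0
  have hν1 : ν + 1 = (N:ℝ) / 2 := by rw [hν]; ring
  have h1 := gB_pos_succ hν0 (Z := z0) (fun z hz => hpos z ⟨hz.1.le, hz.2⟩)
  have hge := zero_ge hν0 hz0 hg hpos
  set j : ℝ := 2 * √z0 with hj
  have hj0 : 0 < j := by positivity
  have hjz : j ^ 2 / 4 = z0 := by rw [hj, mul_pow, Real.sq_sqrt hz0.le]; ring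
  have hjN : (N : ℝ) < j ^ 2 := by
    have : j ^ 2 = 4 * z0 := by linarith
    rw [this]; linarith
  have hzero : besselJzero ν = j := by
    have : IsLeast {x : ℝ | 0 < x ∧ besselJ ν x = 0} j := by
      constructor
      · refine ⟨hj0, ?_⟩
        rw [besselJ_eq hj0, hjz, hg, mul_zero]
      · rintro x ⟨hx, hJ⟩
        by_contra! hlt
        rw [besselJ_eq hx] at hJ
        have h2 : x ^ 2 / 4 < z0 := by rw [← hjz]; gcongr
        have := hpos (x ^ 2 / 4) ⟨by positivity, h2⟩
        have := Real.rpow_pos_of_pos (half_pos hx) ν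
        have : 0 < (x / 2) ^ ν * gB ν (x ^ 2 / 4) := by positivity
        linarith
    exact this.csInf_eq
  have hsq : ∀ r : ℝ, HasDerivAt (fun r : ℝ => r ^ 2 / 4) (r / 2) r := by
    intro r
    have := (hasDerivAt_pow 2 r).div_const 4
    refine this.congr_deriv ?_; push_cast; ring
  have hcomp : ∀ μ : ℝ, 0 ≤ μ → ∀ r : ℝ, HasDerivAt (fun r : ℝ => gB μ (r ^ 2 / 4))
      (-(gB (μ + 1) (r ^ 2 / 4)) * (r / 2)) r := fun μ hμ r =>
    HasDerivAt.comp (h₂ := gB μ) r (gB_hasDerivAt hμ (r ^ 2 / 4)) (hsq r)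
  have hderiv : deriv (besselJ ν) j = - ((j / 2) ^ ν * (gB (ν + 1) z0 * (j / 2))) := by
    have heq : besselJ ν =ᶠ[𝓝 j] fun x => (x / 2) ^ ν * gB ν (x ^ 2 / 4) := by
      filter_upwards [lt_mem_nhds hj0] with x hx using besselJ_eq hx
    rw [heq.deriv_eq]
    have hd : HasDerivAt (fun x : ℝ => (x / 2) ^ ν) (1 / 2 * ν * (j / 2) ^ (ν - 1)) j := by
      exact ((hasDerivAt_id j).div_const 2).rpow_const (Or.inl (by simp; positivity))
    have := hd.mul (hcomp ν hν0 j)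
    have h' := this.deriv
    rw [hjz, hg] at h'
    have hE : (fun x : ℝ => (x / 2) ^ ν * gB ν (x ^ 2 / 4)) = (fun x : ℝ => (x / 2) ^ ν) *
      (fun x : ℝ => gB ν (x ^ 2 / 4)) := rfl
    rw [hE, h']; ring
  have hpow : ∀ r : ℝ, 0 < r → ((r / 2) ^ ν) ^ 2 = (r / 2) ^ (N - 2) := by
    intro r hr
    rw [← Real.rpow_natCast, ← Real.rpow_mul (by positivity), ← Real.rpow_natCast]
    congr 1
    rw [Nat.cast_sub hN, hν]; push_cast; ring
  have h_intg : ∫ r in (0:ℝ)..j, r * besselJ ν r ^ 2 = (j * deriv (besselJ ν) j) ^ 2 / 2 := by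
    have hcongr : ∫ r in (0:ℝ)..j, r * besselJ ν r ^ 2 =
        ∫ r in (0:ℝ)..j, r * ((r / 2) ^ (N - 2) * gB ν (r ^ 2 / 4) ^ 2) := by
      rw [intervalIntegral.integral_of_le hj0.le, intervalIntegral.integral_of_le hj0.le]
      refine setIntegral_congr_fun measurableSet_Ioc (fun r hr => ?_)
      simp only [besselJ_eq hr.1, mul_pow, hpow r hr.1]
    rw [hcongr]
    have hanti : ∀ r ∈ uIcc 0 j, HasDerivAt (fun r : ℝ => 2 * (r / 2) ^ N *
        (gB ν (r ^ 2 / 4) ^ 2 - ν * (gB ν (r ^ 2 / 4) * gB (ν + 1) (r ^ 2 / 4)) +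
          (r ^ 2 / 4) * gB (ν + 1) (r ^ 2 / 4) ^ 2))
        (r * ((r / 2) ^ (N - 2) * gB ν (r ^ 2 / 4) ^ 2)) r := by
      intro r _
      have d0 := hcomp ν hν0 r
      have d1 := hcomp (ν + 1) (by positivity) r
      have dp : HasDerivAt (fun r : ℝ => 2 * (r / 2) ^ N) (2 * (N * (r / 2) ^ (N - 1) * (1 / 2))) r :=
        (((hasDerivAt_id r).div_const 2).pow N).const_mul 2
      have := dp.mul (((d0.pow 2).sub ((d0.mul d1).const_mul ν)).add ((hsq r).mul (d1.pow 2)))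
      refine this.congr_deriv ?_
      have rr := gB_rec hν0 (r ^ 2 / 4)
      obtain ⟨k, rfl⟩ : ∃ k, N = k + 2 := ⟨N - 2, by omega⟩
      have e3 : ν + 1 + 1 = ν + 2 := by ring
      simp only [Nat.add_sub_cancel, show k + 2 - 1 = k + 1 by omega, e3, Pi.add_apply,
        Pi.sub_apply, Pi.pow_apply, Pi.mul_apply]
      have hk : ((k + 2 : ℕ) : ℝ) = 2 * (ν + 1) := by rw [hν1]; ring
      rw [hk]
      generalize gB ν (r ^ 2 / 4) = a at *
      generalize gB (ν + 1) (r ^ 2 / 4) = b at *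
      generalize gB (ν + 2) (r ^ 2 / 4) = c at *
      rw [rr]
      push_cast
      ring
    rw [intervalIntegral.integral_eq_sub_of_hasDerivAt hanti]
    · rw [hderiv, hjz, hg]
      have h0 : (0 / 2 : ℝ) ^ N = 0 := by simp; omega
      rw [h0]
      have h2 : (j / 2) ^ N = ((j / 2) ^ ν) ^ 2 * (j / 2) ^ 2 := by
        rw [hpow j hj0, ← pow_add]; congr 1; omega
      rw [h2, ← hjz]; ring
    · apply Continuous.intervalIntegrable
      have := gB_cont hν0
      fun_prop
  refine ⟨j, hj0, by rw [hjz]; exact hg, by rw [hjz]; exact hpos,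
    by rw [hjz, ← hν1]; exact h1, hjN, ?_⟩
  unfold CN
  rw [← hν, hzero, h_intg]
  have hne : deriv (besselJ ν) j ≠ 0 := by
    rw [hderiv]
    have := h1 z0 ⟨hz0.le, le_rfl⟩
    have := Real.rpow_pos_of_pos (half_pos hj0) ν
    have : 0 < ((j / 2) ^ ν * (gB (ν + 1) z0 * (j / 2))) := by positivity
    linarith
  have : j ^ 2 - N ≠ 0 := by linarith
  field_simp
  ring

/-- Partial derivative. -/
noncomputable def pd {N : ℕ} (i : Fin N) (u : euc N → ℝ) (x : euc N) : ℝ :=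
  fderiv ℝ u x (EuclideanSpace.single i 1)

/-- Smooth solutions of the Helmholtz equation on the whole space. -/
def Helm {N : ℕ} (lam : ℝ) (v : euc N → ℝ) : Prop :=
  ContDiff ℝ (⊤ : ℕ∞) v ∧ ∀ x, ∑ i, pd i (pd i v) x = - lam * v x

lemma norm_gradient_sq {N : ℕ} (u : euc N → ℝ) (x : euc N) :
    ‖gradient u x‖ ^ 2 = ∑ i, (pd i u x) ^ 2 := by
  rw [EuclideanSpace.norm_sq_eq]
  congr 1; ext i
  have h : pd i u x = (gradient u x) i := by
    have h1 : (gradient u x) i = ⟪gradient u x, EuclideanSpace.single i (1:ℝ)⟫ := by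
      rw [EuclideanSpace.inner_single_right]; simp
    rw [h1, gradient, InnerProductSpace.toDual_symm_apply]; rfl
  rw [h, Real.norm_eq_abs, sq_abs]

lemma pd_contDiff {N : ℕ} {u : euc N → ℝ} {n : ℕ} (hu : ContDiff ℝ (n + 1 : ℕ) u) (i : Fin N) :
    ContDiff ℝ n (pd i u) := by
  unfold pd
  exact (hu.fderiv_right (m := n) (by push_cast; rfl)).clm_apply contDiff_const

lemma pd_contDiff_top {N : ℕ} {u : euc N → ℝ} (hu : ContDiff ℝ (⊤ : ℕ∞) u) (i : Fin N) :
    ContDiff ℝ (⊤ : ℕ∞) (pd i u) :=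
  contDiff_infty.2 fun n => pd_contDiff (contDiff_infty.1 hu (n + 1)) i

lemma pd_hasCompactSupport {N : ℕ} {u : euc N → ℝ} (hu : HasCompactSupport u) (i : Fin N) :
    HasCompactSupport (pd i u) := by
  have := hu.fderiv (𝕜 := ℝ)
  unfold pd
  exact this.comp_left (g := fun L : euc N →L[ℝ] ℝ => L (EuclideanSpace.single i 1)) (by simp)

lemma hcs_sq {N : ℕ} {u : euc N → ℝ} (h : HasCompactSupport u) :
    HasCompactSupport (fun x => u x ^ 2) :=
  HasCompactSupport.intro h.isCompact (fun x hx => by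
    have h0 : u x = 0 := image_eq_zero_of_notMem_tsupport hx
    simp [h0])

lemma integrable_sq {N : ℕ} {u : euc N → ℝ} (hu : Continuous u) (h : HasCompactSupport u) :
    Integrable (fun x => u x ^ 2) :=
  (hu.pow 2).integrable_of_hasCompactSupport (hcs_sq h)

lemma helm_ibp {N : ℕ} {lam : ℝ} {v φ : euc N → ℝ} (hv : Helm lam v) (hφ : ContDiff ℝ 1 φ)
    (hc : HasCompactSupport φ) :
    ∫ x, ∑ i, pd i v x * pd i φ x = lam * ∫ x, v x * φ x := by
  have hcv := hv.1.continuous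
  have hcφ := hφ.continuous
  have hcpv : ∀ i, Continuous (pd i v) := fun i => (pd_contDiff_top hv.1 i).continuous
  have hcppv : ∀ i, Continuous (pd i (pd i v)) := fun i =>
    (pd_contDiff_top (pd_contDiff_top hv.1 i) i).continuous
  have hcpφ : ∀ i, Continuous (pd i φ) := fun i =>
    (pd_contDiff (n := 0) (by simpa using hφ) i).continuous
  have i1 : ∀ i, Integrable (fun x => pd i v x * pd i φ x) := fun i =>
    ((hcpv i).mul (hcpφ i)).integrable_of_hasCompactSupport
      ((pd_hasCompactSupport hc i).mul_left)
  have i2 : ∀ i, Integrable (fun x => pd i (pd i v) x * φ x) := fun i =>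
    ((hcppv i).mul hcφ).integrable_of_hasCompactSupport hc.mul_left
  have i3 : ∀ i, Integrable (fun x => pd i v x * φ x) := fun i =>
    ((hcpv i).mul hcφ).integrable_of_hasCompactSupport hc.mul_left
  rw [integral_finsetSum _ (fun i _ => i1 i)]
  have : ∀ i, ∫ x, pd i v x * pd i φ x = - ∫ x, pd i (pd i v) x * φ x := fun i =>
    integral_mul_fderiv_eq_neg_fderiv_mul_of_integrable (i2 i) (i1 i) (i3 i)
      (fun x _ => (pd_contDiff_top hv.1 i).differentiable (by simp) x)
      (fun x _ => hφ.differentiable (by simp) x)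
  simp_rw [this]
  rw [Finset.sum_neg_distrib, ← integral_finsetSum _ (fun i _ => i2 i), ← integral_neg,
    ← integral_const_mul]
  congr 1; ext x
  rw [← Finset.sum_mul, hv.2 x]; ring

lemma barta {N : ℕ} {lam : ℝ} {v u : euc N → ℝ} {E : Set (euc N)} (hv : Helm lam v)
    (hpos : ∀ x ∈ E, 0 < v x) (hu : ContDiff ℝ (⊤ : ℕ∞) u) (hc : HasCompactSupport u)
    (hs : tsupport u ⊆ E) :
    lam * ∫ x, u x ^ 2 ≤ ∫ x, ‖gradient u x‖ ^ 2 := by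
  set φ : euc N → ℝ := fun x => u x ^ 2 / v x with hφdef
  have hout : ∀ x, x ∉ tsupport u → φ =ᶠ[𝓝 x] fun _ => 0 := by
    intro x hx
    have := notMem_tsupport_iff_eventuallyEq.1 hx
    filter_upwards [this] with y hy
    simp [hφdef, hy]
  have hφ : ContDiff ℝ 1 φ := by
    rw [contDiff_iff_contDiffAt]
    intro x
    by_cases hx : x ∈ tsupport u
    · exact ((hu.contDiffAt.of_le (by exact_mod_cast le_top)).pow 2).div
        (hv.1.contDiffAt.of_le (by exact_mod_cast le_top)) (hpos x (hs hx)).ne'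
    · exact contDiffAt_const.congr_of_eventuallyEq (hout x hx)
  have hcφ : HasCompactSupport φ := by
    refine HasCompactSupport.intro hc.isCompact (fun x hx => ?_)
    exact (hout x hx).self_of_nhds
  have h := helm_ibp hv hφ hcφ
  have e1 : ∀ x, v x * φ x = u x ^ 2 := by
    intro x
    by_cases hx : x ∈ tsupport u
    · have := (hpos x (hs hx)).ne'
      simp only [hφdef]; field_simp
    · have : u x = 0 := image_eq_zero_of_notMem_tsupport hx
      simp [hφdef, this]
  simp_rw [e1] at h
  rw [← h]
  have hcpφ : ∀ i, Continuous (pd i φ) := fun i =>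
    (pd_contDiff (n := 0) (by simpa using hφ) i).continuous
  have hcpv : ∀ i, Continuous (pd i v) := fun i => (pd_contDiff_top hv.1 i).continuous
  have hcpu : ∀ i, Continuous (pd i u) := fun i => (pd_contDiff_top hu i).continuous
  simp_rw [norm_gradient_sq]
  apply integral_mono
  · exact integrable_finsetSum _ fun i _ =>
      ((hcpv i).mul (hcpφ i)).integrable_of_hasCompactSupport (pd_hasCompactSupport hcφ i).mul_left
  · exact integrable_finsetSum _ fun i _ => integrable_sq (hcpu i) (pd_hasCompactSupport hc i)
  · intro x
    apply Finset.sum_le_sum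
    intro i _
    by_cases hx : x ∈ tsupport u
    · have hvx := hpos x (hs hx)
      have hdv : DifferentiableAt ℝ v x := hv.1.differentiable (by simp) x
      have hdu : DifferentiableAt ℝ u x := hu.differentiable (by simp) x
      have hdφ : DifferentiableAt ℝ φ x := hφ.differentiable (by simp) x
      have hd1 := hdv.hasFDerivAt.mul hdφ.hasFDerivAt
      have hd2 := hdu.hasFDerivAt.pow 2
      have hE : v * φ = (fun x => u x ^ 2) := funext e1
      rw [hE] at hd1
      have huniq := congrArg (fun L : euc N →L[ℝ] ℝ => L (EuclideanSpace.single i 1))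
        (hd1.unique hd2)
      have huniq' : v x * pd i φ x + φ x * pd i v x = 2 * u x * pd i u x := by
        simpa [pd] using huniq
      have : pd i φ x = (v x * (2 * u x * pd i u x) - u x ^ 2 * pd i v x) / v x ^ 2 := by
        have := e1 x
        rw [← this, ← huniq']
        field_simp; ring
      rw [this]
      have e : (pd i u x) ^ 2 - pd i v x * ((v x * (2 * u x * pd i u x) - u x ^ 2 * pd i v x) / v x ^ 2)
        = (pd i u x - u x * pd i v x / v x) ^ 2 := by
        field_simp; ring
      nlinarith [sq_nonneg (pd i u x - u x * pd i v x / v x)]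
    · have : pd i φ x = 0 := by
        unfold pd; rw [(hout x hx).fderiv_eq]; simp
      rw [this]; nlinarith [sq_nonneg (pd i u x)]

/-- A smooth truncation. -/
noncomputable def trunc (ε s : ℝ) : ℝ := ∫ σ in (0:ℝ)..s, Real.smoothTransition (σ / ε - 1)

lemma trunc_hasDerivAt (ε s : ℝ) :
    HasDerivAt (trunc ε) (Real.smoothTransition (s / ε - 1)) s := by
  have hc : Continuous (fun σ : ℝ => Real.smoothTransition (σ / ε - 1)) :=
    Real.smoothTransition.continuous.comp (by fun_prop)
  exact intervalIntegral.integral_hasDerivAt_right (hc.intervalIntegrable _ _)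
    (hc.stronglyMeasurableAtFilter _ _) hc.continuousAt

lemma trunc_smooth (ε : ℝ) : ContDiff ℝ (⊤ : ℕ∞) (trunc ε) := by
  rw [contDiff_infty_iff_deriv]
  refine ⟨fun s => (trunc_hasDerivAt ε s).differentiableAt, ?_⟩
  have : deriv (trunc ε) = fun s => Real.smoothTransition (s / ε - 1) :=
    funext fun s => (trunc_hasDerivAt ε s).deriv
  rw [this]
  exact Real.smoothTransition.contDiff.comp (by fun_prop)

lemma trunc_eq_zero {ε s : ℝ} (hε : 0 < ε) (hs : s ≤ ε) : trunc ε s = 0 := by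
  unfold trunc
  rw [intervalIntegral.integral_congr (g := fun _ => 0)]
  · simp
  · intro σ hσ
    apply Real.smoothTransition.zero_of_nonpos
    have : σ ≤ ε := by
      rcases le_total 0 s with h | h
      · rw [uIcc_of_le h] at hσ; exact hσ.2.trans hs
      · rw [uIcc_of_ge h] at hσ; exact hσ.2.trans hε.le
    rw [sub_nonpos, div_le_one hε]; exact this

lemma trunc_nonneg {ε s : ℝ} (hε : 0 < ε) : 0 ≤ trunc ε s := by
  rcases le_total s ε with h | h
  · rw [trunc_eq_zero hε h]
  · exact intervalIntegral.integral_nonneg (hε.le.trans h)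
      (fun σ _ => Real.smoothTransition.nonneg _)

lemma trunc_ge {ε s : ℝ} (hε : 0 < ε) : s - 2 * ε ≤ trunc ε s := by
  rcases le_total s (2 * ε) with h | h
  · have := trunc_nonneg (s := s) hε; linarith
  · have hm : MonotoneOn (fun s => trunc ε s - s) (Ici (2 * ε)) := by
      have hd : ∀ x, HasDerivAt (fun s => trunc ε s - s)
        (Real.smoothTransition (x / ε - 1) - 1) x := fun x =>
        (trunc_hasDerivAt ε x).sub (hasDerivAt_id x)
      apply monotoneOn_of_deriv_nonneg (convex_Ici _)
      · exact (Differentiable.continuous fun x => (hd x).differentiableAt).continuousOn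
      · exact fun x _ => (hd x).differentiableAt.differentiableWithinAt
      · intro x hx
        rw [interior_Ici] at hx
        rw [(hd x).deriv, Real.smoothTransition.one_of_one_le]
        · simp
        · have : 2 ≤ x / ε := by rw [le_div_iff₀ hε]; exact (mem_Ioi.1 hx).le
          linarith
    have h1 := hm (mem_Ici.2 le_rfl) h h
    have h2 := trunc_nonneg (s := 2 * ε) hε
    simp only at h1
    linarith

/-- The set of Rayleigh quotients. -/
def raySet (N : ℕ) (Ω : Set (euc N)) : Set ℝ := { R : ℝ | ∃ u : euc N → ℝ,
    ContDiff ℝ (⊤ : ℕ∞) u ∧ HasCompactSupport u ∧ tsupport u ⊆ Ω ∧ u ≠ 0 ∧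
    R = (∫ x, ‖gradient u x‖ ^ 2) / (∫ x, u x ^ 2) }

lemma firstEigenvalue_eq (N : ℕ) (Ω : Set (euc N)) : firstEigenvalue N Ω = sInf (raySet N Ω) := rfl

lemma raySet_nonneg {N : ℕ} {Ω : Set (euc N)} {R : ℝ} (h : R ∈ raySet N Ω) : 0 ≤ R := by
  obtain ⟨u, -, -, -, -, rfl⟩ := h
  positivity

lemma integral_sq_pos {N : ℕ} {u : euc N → ℝ} (hu : Continuous u) (hc : HasCompactSupport u)
    (h0 : u ≠ 0) : 0 < ∫ x, u x ^ 2 := by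
  obtain ⟨x, hx⟩ : ∃ x, u x ≠ 0 := by
    by_contra! h; exact h0 (funext h)
  refine (hu.pow 2).integral_pos_of_hasCompactSupport_nonneg_nonzero
    (hcs_sq hc) (fun x => sq_nonneg _) (x := x) ?_
  positivity

lemma raySet_lower {N : ℕ} {lam : ℝ} {v : euc N → ℝ} {E : Set (euc N)} (hv : Helm lam v)
    (hpos : ∀ x ∈ E, 0 < v x) {R : ℝ} (hR : R ∈ raySet N E) : lam ≤ R := by
  obtain ⟨u, hu, hc, hs, h0, rfl⟩ := hR
  rw [le_div_iff₀ (integral_sq_pos hu.continuous hc h0)]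
  exact barta hv hpos hu hc hs

lemma raySet_upper {N : ℕ} {lam : ℝ} (hlam : 0 ≤ lam) {v : euc N → ℝ} {E : Set (euc N)}
    (hv : Helm lam v) (hE : IsOpen E) (hb : Bornology.IsBounded E)
    (hfr : ∀ x ∈ frontier E, v x ≤ 0) {x0 : euc N} (hx0 : x0 ∈ E) (hvx0 : 0 < v x0)
    {η : ℝ} (hη : 0 < η) : ∃ R ∈ raySet N E, R ≤ lam + η := by
  have hcv := hv.1.continuous
  -- a small ball where v is large
  obtain ⟨ρ, hρ, hball⟩ : ∃ ρ > 0, ∀ x ∈ ball x0 ρ, x ∈ E ∧ v x0 / 2 < v x := by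
    have h1 : E ∈ 𝓝 x0 := hE.mem_nhds hx0
    have h2 : {x | v x0 / 2 < v x} ∈ 𝓝 x0 :=
      (isOpen_lt continuous_const hcv).mem_nhds (by simp; linarith)
    obtain ⟨ρ, hρ, h⟩ := Metric.mem_nhds_iff.1 (inter_mem h1 h2)
    exact ⟨ρ, hρ, fun x hx => h hx⟩
  set c : ℝ := (v x0 / 4) ^ 2 * (volume (ball x0 ρ)).toReal with hcdef
  have hvol : 0 < (volume (ball x0 ρ)).toReal :=
    ENNReal.toReal_pos (measure_ball_pos _ _ hρ).ne' measure_ball_lt_top.ne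
  have hc0 : 0 < c := by positivity
  set V : ℝ := (volume E).toReal with hV
  have hV0 : 0 ≤ V := ENNReal.toReal_nonneg
  have hEfin : volume E ≠ ⊤ := hb.measure_lt_top.ne
  -- choose ε
  obtain ⟨ε, hε, hε1, hε2⟩ : ∃ ε > 0, 2 * ε ≤ v x0 / 4 ∧ lam * (2 * ε + 2 * ε * V / c) ≤ η := by
    have hlim : Tendsto (fun ε : ℝ => lam * (2 * ε + 2 * ε * V / c)) (𝓝[>] 0) (𝓝 0) := by
      have : Continuous (fun ε : ℝ => lam * (2 * ε + 2 * ε * V / c)) := by fun_prop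
      have h := this.tendsto 0
      simp only [mul_zero, zero_mul, zero_div, add_zero] at h
      exact h.mono_left inf_le_left
    have hlim2 : Tendsto (fun ε : ℝ => 2 * ε) (𝓝[>] 0) (𝓝 0) := by
      have : Continuous (fun ε : ℝ => 2 * ε) := by fun_prop
      have h := this.tendsto 0
      simp only [mul_zero] at h
      exact h.mono_left inf_le_left
    have ev1 := hlim.eventually (ge_mem_nhds hη)
    have ev2 := hlim2.eventually (ge_mem_nhds (by positivity : 0 < v x0 / 4))
    obtain ⟨ε, h1, h2, h3⟩ := (ev1.and (ev2.and self_mem_nhdsWithin)).exists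
    exact ⟨ε, h3, h2, h1⟩
  set K : Set (euc N) := closure E ∩ {x | ε ≤ v x} with hK
  have hKcl : IsClosed K := isClosed_closure.inter (isClosed_le continuous_const hcv)
  have hKc : IsCompact K := 
    Metric.isCompact_of_isClosed_isBounded hKcl (hb.closure.subset inter_subset_left)
  have hKE : K ⊆ E := by
    rintro x ⟨hx1, hx2⟩
    by_contra hx
    have : x ∈ frontier E := by rw [hE.frontier_eq]; exact ⟨hx1, hx⟩
    have := hfr x this
    have : ε ≤ v x := hx2
    linarith
  set u : euc N → ℝ := E.indicator (fun x => trunc ε (v x)) with hu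
  have huin : ∀ x ∈ E, u x = trunc ε (v x) := fun x hx => indicator_of_mem hx _
  have huout : ∀ x, x ∉ E → u x = 0 := fun x hx => indicator_of_notMem hx _
  have hu0 : ∀ x, x ∉ K → u x = 0 := by
    intro x hx
    by_cases hxE : x ∈ E
    · rw [huin x hxE]
      apply trunc_eq_zero hε
      by_contra! h
      exact hx ⟨subset_closure hxE, h.le⟩
    · exact huout x hxE
  have hun : ∀ x, 0 ≤ u x := by
    intro x
    by_cases hxE : x ∈ E
    · rw [huin x hxE]; exact trunc_nonneg hε
    · rw [huout x hxE]
  have hevin : ∀ x ∈ E, u =ᶠ[𝓝 x] fun x => trunc ε (v x) := by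
    intro x hx
    filter_upwards [hE.mem_nhds hx] with y hy using huin y hy
  have hevout : ∀ x, x ∉ K → u =ᶠ[𝓝 x] fun _ => 0 := by
    intro x hx
    filter_upwards [hKcl.isOpen_compl.mem_nhds hx] with y hy using hu0 y hy
  have husm : ContDiff ℝ (⊤ : ℕ∞) u := by
    rw [contDiff_iff_contDiffAt]
    intro x
    by_cases hx : x ∈ K
    · exact ((trunc_smooth ε).comp hv.1).contDiffAt.congr_of_eventuallyEq (hevin x (hKE hx))
    · exact contDiffAt_const.congr_of_eventuallyEq (hevout x hx)
  have hucs : HasCompactSupport u := HasCompactSupport.intro hKc hu0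
  have hts : tsupport u ⊆ E := by
    refine (closure_minimal ?_ hKcl).trans hKE
    intro x hx
    by_contra h
    exact hx (hu0 x h)
  have hcu := husm.continuous
  have h_intg2 : Integrable (fun x => u x ^ 2) := integrable_sq hcu hucs
  have hlow : c ≤ ∫ x, u x ^ 2 := by
    have h1 : ∀ x ∈ ball x0 ρ, (v x0 / 4) ^ 2 ≤ u x ^ 2 := by
      intro x hx
      obtain ⟨hxE, hxv⟩ := hball x hx
      rw [huin x hxE]
      have := trunc_ge (s := v x) hε
      gcongr
      linarith
    calc c = ∫ x in ball x0 ρ, (v x0 / 4) ^ 2 := by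
            rw [setIntegral_const, smul_eq_mul, hcdef, Measure.real]; ring
      _ ≤ ∫ x in ball x0 ρ, u x ^ 2 :=
          setIntegral_mono_on (integrableOn_const measure_ball_lt_top.ne) h_intg2.integrableOn
            measurableSet_ball h1
      _ ≤ ∫ x, u x ^ 2 := setIntegral_le_integral h_intg2 (Eventually.of_forall fun x => sq_nonneg _)
  have hI : 0 < ∫ x, u x ^ 2 := hc0.trans_le hlow
  have hune : u ≠ 0 := by
    intro h; rw [h] at hI; simp at hI
  refine ⟨_, ⟨u, husm, hucs, hts, hune, rfl⟩, ?_⟩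
  have hibp := helm_ibp hv (husm.of_le (by exact_mod_cast le_top)) hucs
  have hcpu : ∀ i, Continuous (pd i u) := fun i => (pd_contDiff_top husm i).continuous
  have hcpv : ∀ i, Continuous (pd i v) := fun i => (pd_contDiff_top hv.1 i).continuous
  have hstep1 : ∫ x, ‖gradient u x‖ ^ 2 ≤ lam * ∫ x, v x * u x := by
    rw [← hibp]
    simp_rw [norm_gradient_sq]
    apply integral_mono
    · exact integrable_finsetSum _ fun i _ => integrable_sq (hcpu i)
        (pd_hasCompactSupport hucs i)
    · exact integrable_finsetSum _ fun i _ =>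
        ((hcpv i).mul (hcpu i)).integrable_of_hasCompactSupport
          (pd_hasCompactSupport hucs i).mul_left
    · intro x
      apply Finset.sum_le_sum
      intro i _
      by_cases hx : x ∈ K
      · have hd := (trunc_hasDerivAt ε (v x)).comp_hasFDerivAt x
          (hv.1.differentiable (by simp) x).hasFDerivAt
        have : pd i u x = Real.smoothTransition (v x / ε - 1) * pd i v x := by
          unfold pd
          rw [(hevin x (hKE hx)).fderiv_eq]
          have := hd.fderiv
          simp only [Function.comp_def] at this
          rw [this]; simp
        rw [this]
        have a1 := Real.smoothTransition.nonneg (v x / ε - 1)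
        have a2 := Real.smoothTransition.le_one (v x / ε - 1)
        generalize Real.smoothTransition (v x / ε - 1) = s at *
        have : s * s ≤ s := by nlinarith
        nlinarith [sq_nonneg (pd i v x)]
      · have : pd i u x = 0 := by
          unfold pd; rw [(hevout x hx).fderiv_eq]; simp
        rw [this]; simp
  have hstep2 : ∫ x, v x * u x ≤ (1 + 2 * ε) * (∫ x, u x ^ 2) + 2 * ε * V := by
    have hind : Integrable (E.indicator (fun _ => (1:ℝ))) :=
      (integrable_indicator_iff hE.measurableSet).2 (integrableOn_const hEfin)
    have hVi : V = ∫ x, E.indicator (fun _ => (1:ℝ)) x := by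
      rw [integral_indicator hE.measurableSet]; simp [Measure.real, hV]
    rw [hVi, ← integral_const_mul, ← integral_const_mul, ← integral_add (h_intg2.const_mul _)
      (hind.const_mul _)]
    apply integral_mono
    · exact (hcv.mul hcu).integrable_of_hasCompactSupport hucs.mul_left
    · exact (h_intg2.const_mul _).add (hind.const_mul _)
    · intro x
      simp only
      by_cases hxE : x ∈ E
      · rw [indicator_of_mem hxE]
        have h1 := trunc_ge (s := v x) hε
        rw [← huin x hxE] at h1
        have h2 := hun x
        nlinarith [mul_nonneg h2 (sub_nonneg.2 h1), sq_nonneg (u x - 1), mul_nonneg hε.le (sq_nonneg (u x - 1)), mul_nonneg hε.le (sq_nonneg (u x))]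
      · rw [huout x hxE, indicator_of_notMem hxE]; simp
  rw [div_le_iff₀ hI]
  have hcV : 2 * ε * V ≤ 2 * ε * V / c * ∫ x, u x ^ 2 := by
    rw [div_mul_eq_mul_div, le_div_iff₀ hc0]
    gcongr
  calc _ ≤ lam * ∫ x, v x * u x := hstep1
    _ ≤ lam * ((1 + 2 * ε) * (∫ x, u x ^ 2) + 2 * ε * V / c * ∫ x, u x ^ 2) := by
        gcongr; exact hstep2.trans (by linarith)
    _ = (lam + lam * (2 * ε + 2 * ε * V / c)) * ∫ x, u x ^ 2 := by ring
    _ ≤ _ := by gcongr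

lemma firstEigenvalue_upper {N : ℕ} {lam : ℝ} (hlam : 0 ≤ lam) {v : euc N → ℝ} {E : Set (euc N)}
    (hv : Helm lam v) (hE : IsOpen E) (hb : Bornology.IsBounded E)
    (hfr : ∀ x ∈ frontier E, v x ≤ 0) {x0 : euc N} (hx0 : x0 ∈ E) (hvx0 : 0 < v x0) :
    (raySet N E).Nonempty ∧ firstEigenvalue N E ≤ lam := by
  constructor
  · obtain ⟨R, hR, -⟩ := raySet_upper hlam hv hE hb hfr hx0 hvx0 one_pos
    exact ⟨R, hR⟩
  · apply le_of_forall_pos_le_add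
    intro η hη
    obtain ⟨R, hR, hle⟩ := raySet_upper hlam hv hE hb hfr hx0 hvx0 hη
    exact (csInf_le ⟨0, fun r hr => raySet_nonneg hr⟩ hR).trans hle

lemma firstEigenvalue_lower {N : ℕ} {lam : ℝ} {v : euc N → ℝ} {E : Set (euc N)}
    (hv : Helm lam v) (hpos : ∀ x ∈ E, 0 < v x) (hne : (raySet N E).Nonempty) :
    lam ≤ firstEigenvalue N E :=
  le_csInf hne fun _ hR => raySet_lower hv hpos hR

/-- smooth with given partial derivative -/
def HP {N : ℕ} (i : Fin N) (u w : euc N → ℝ) : Prop :=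
  ContDiff ℝ (⊤ : ℕ∞) u ∧ ∀ x, pd i u x = w x

lemma HP.diff {N : ℕ} {i : Fin N} {u w : euc N → ℝ} (h : HP i u w) (x) : DifferentiableAt ℝ u x :=
  h.1.differentiable (by simp) x

lemma HP.pd_eq {N : ℕ} {i : Fin N} {u w : euc N → ℝ} (h : HP i u w) : pd i u = w := funext h.2

lemma HP.add {N : ℕ} {i : Fin N} {u w u' w' : euc N → ℝ} (h : HP i u w) (h' : HP i u' w') :
    HP i (fun x => u x + u' x) (fun x => w x + w' x) := by
  refine ⟨h.1.add h'.1, fun x => ?_⟩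
  have := ((h.diff x).hasFDerivAt.add (h'.diff x).hasFDerivAt).fderiv
  have e : (u + u') = fun x => u x + u' x := rfl
  rw [e] at this
  simp only [← h.2, ← h'.2]; unfold pd; rw [this]; rfl

lemma HP.mul {N : ℕ} {i : Fin N} {u w u' w' : euc N → ℝ} (h : HP i u w) (h' : HP i u' w') :
    HP i (fun x => u x * u' x) (fun x => w x * u' x + u x * w' x) := by
  refine ⟨h.1.mul h'.1, fun x => ?_⟩
  have := ((h.diff x).hasFDerivAt.mul (h'.diff x).hasFDerivAt).fderiv
  have e : (u * u') = fun x => u x * u' x := rfl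
  rw [e] at this
  simp only [← h.2, ← h'.2]; unfold pd; rw [this]; simp; ring

lemma HP.const {N : ℕ} (i : Fin N) (a : ℝ) : HP i (fun _ => a) (fun _ => 0) :=
  ⟨contDiff_const, fun x => by unfold pd; simp⟩

lemma HP.comp {N : ℕ} {i : Fin N} {u w : euc N → ℝ} (h : HP i u w) {F F' : ℝ → ℝ}
    (hF : ContDiff ℝ (⊤ : ℕ∞) F) (hF' : ∀ s, HasDerivAt F (F' s) s) :
    HP i (fun x => F (u x)) (fun x => F' (u x) * w x) := by
  refine ⟨hF.comp h.1, fun x => ?_⟩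
  have := ((hF' (u x)).comp_hasFDerivAt x (h.diff x).hasFDerivAt).fderiv
  have e : F ∘ u = fun x => F (u x) := rfl
  rw [e] at this
  simp only [← h.2]; unfold pd; rw [this]; simp

lemma HP.congr {N : ℕ} {i : Fin N} {u w u' w' : euc N → ℝ} (h : HP i u w) (hu : ∀ x, u x = u' x)
    (hw : ∀ x, w x = w' x) : HP i u' w' := by
  have e1 : u = u' := funext hu
  have e2 : w = w' := funext hw
  subst e1; subst e2; exact h

lemma HP.coord {N : ℕ} (i k : Fin N) : HP i (fun x => x k) (fun _ => if k = i then 1 else 0) := by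
  refine ⟨by fun_prop, fun x => ?_⟩
  have := (EuclideanSpace.proj k : euc N →L[ℝ] ℝ).hasFDerivAt (x := x)
  have := this.fderiv
  have e : (⇑(EuclideanSpace.proj k : euc N →L[ℝ] ℝ)) = fun x => x k := rfl
  rw [e] at this
  unfold pd; rw [this]; simp [Pi.single_apply]

lemma HP.sum {N : ℕ} {i : Fin N} {ι : Type*} (S : Finset ι) {u w : ι → euc N → ℝ}
    (h : ∀ k, HP i (u k) (w k)) :
    HP i (fun x => ∑ k ∈ S, u k x) (fun x => ∑ k ∈ S, w k x) := by
  classical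
  induction S using Finset.induction_on with
  | empty => simpa using HP.const i 0
  | insert a S ha ih =>
    refine ((h a).add ih).congr (fun x => ?_) (fun x => ?_) <;> rw [Finset.sum_insert ha]

/-- diagonal quadratic form -/
noncomputable def Qf {N : ℕ} (a : Fin N → ℝ) (x : euc N) : ℝ := ∑ k, a k * x k ^ 2

lemma HP.quad {N : ℕ} (i : Fin N) (a : Fin N → ℝ) : HP i (Qf a) (fun x => 2 * a i * x i) := by
  have h := HP.sum (i := i) Finset.univ (fun k => (HP.const i (a k)).mul ((HP.coord i k).mul (HP.coord i k)))
  refine h.congr (fun x => ?_) (fun x => ?_)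
  · unfold Qf; simp only [sq]
  · simp only [zero_mul, zero_add]
    rw [Finset.sum_eq_single i]
    · simp; ring
    · intro b _ hb; simp [hb]
    · simp

/-- smooth with given Laplacian -/
def HL {N : ℕ} (u w : euc N → ℝ) : Prop :=
  ContDiff ℝ (⊤ : ℕ∞) u ∧ ∀ x, ∑ i, pd i (pd i u) x = w x

lemma hp_self {N : ℕ} (i : Fin N) {u : euc N → ℝ} (h : ContDiff ℝ (⊤ : ℕ∞) u) : HP i u (pd i u) :=
  ⟨h, fun _ => rfl⟩

lemma HL.congr {N : ℕ} {u w u' w' : euc N → ℝ} (h : HL u w) (hu : ∀ x, u x = u' x)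
    (hw : ∀ x, w x = w' x) : HL u' w' := by
  have e1 : u = u' := funext hu
  have e2 : w = w' := funext hw
  subst e1; subst e2; exact h

lemma HL.add {N : ℕ} {u w u' w' : euc N → ℝ} (h : HL u w) (h' : HL u' w') :
    HL (fun x => u x + u' x) (fun x => w x + w' x) := by
  refine ⟨h.1.add h'.1, fun x => ?_⟩
  simp only [← h.2, ← h'.2, ← Finset.sum_add_distrib]
  refine Finset.sum_congr rfl fun i _ => ?_
  rw [((hp_self i h.1).add (hp_self i h'.1)).pd_eq]
  exact ((hp_self i (pd_contDiff_top h.1 i)).add (hp_self i (pd_contDiff_top h'.1 i))).2 x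

lemma HL.smul {N : ℕ} {u w : euc N → ℝ} (h : HL u w) (a : ℝ) :
    HL (fun x => a * u x) (fun x => a * w x) := by
  refine ⟨contDiff_const.mul h.1, fun x => ?_⟩
  simp only [← h.2, Finset.mul_sum]
  refine Finset.sum_congr rfl fun i _ => ?_
  rw [((HP.const i a).mul (hp_self i h.1)).pd_eq]
  have := ((HP.const i a).mul (hp_self i (pd_contDiff_top h.1 i))).2 x
  simp only [zero_mul, zero_add] at this ⊢
  exact this

lemma HL.of {N : ℕ} {u w : euc N → ℝ} {p q : Fin N → euc N → ℝ} (h1 : ∀ i, HP i u (p i))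
    (h2 : ∀ i, HP i (p i) (q i)) (hN : 0 < N) (hs : ∀ x, ∑ i, q i x = w x) : HL u w := by
  refine ⟨(h1 ⟨0, hN⟩).1, fun x => ?_⟩
  rw [← hs]
  refine Finset.sum_congr rfl fun i _ => ?_
  rw [(h1 i).pd_eq, (h2 i).2]

/-- half square norm -/
noncomputable def hs {N : ℕ} (x : euc N) : ℝ := Qf (fun _ => 1 / 2) x

lemma hs_eq {N : ℕ} (x : euc N) : hs x = ‖x‖ ^ 2 / 2 := by
  unfold hs Qf
  rw [EuclideanSpace.norm_sq_eq, Finset.sum_div]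
  refine Finset.sum_congr rfl fun i _ => ?_
  rw [Real.norm_eq_abs, sq_abs]; ring

lemma HP.hs {N : ℕ} (i : Fin N) : HP i (hs : euc N → ℝ) (fun x => x i) :=
  (HP.quad i (fun _ => 1 / 2)).congr (fun _ => rfl) (fun x => by ring)

/-- radial profiles -/
noncomputable def Fk (ν c : ℝ) (k : ℕ) (s : ℝ) : ℝ := (-c) ^ k * gB (ν + k) (c * s)

lemma Fk_smooth {ν : ℝ} (hν : 0 ≤ ν) (c : ℝ) (k : ℕ) : ContDiff ℝ (⊤ : ℕ∞) (Fk ν c k) := by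
  unfold Fk
  exact contDiff_const.mul ((gB_smooth (by positivity)).comp (contDiff_const.mul contDiff_id))

lemma Fk_deriv {ν : ℝ} (hν : 0 ≤ ν) (c : ℝ) (k : ℕ) (s : ℝ) :
    HasDerivAt (Fk ν c k) (Fk ν c (k + 1) s) s := by
  have h := (gB_hasDerivAt (μ := ν + k) (by positivity) (c * s)).comp s
    ((hasDerivAt_id s).const_mul c)
  have h2 := h.const_mul ((-c) ^ k)
  have e : ν + ((k + 1 : ℕ) : ℝ) = ν + k + 1 := by push_cast; ring
  refine h2.congr_deriv ?_
  unfold Fk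
  rw [e]; ring

lemma Fk_rec {ν : ℝ} (hν : 0 ≤ ν) (c : ℝ) (k : ℕ) (s : ℝ) :
    2 * s * Fk ν c (k + 2) s + (2 * ν + 2 + 2 * k) * Fk ν c (k + 1) s = - (2 * c) * Fk ν c k s := by
  have h := gB_rec (μ := ν + k) (by positivity) (c * s)
  have e : ν + ((k + 1 : ℕ) : ℝ) = ν + k + 1 := by push_cast; ring
  have e2 : ν + ((k + 2 : ℕ) : ℝ) = ν + k + 2 := by push_cast; ring
  unfold Fk
  rw [e, e2, h]; ring

lemma HL.term {N : ℕ} (hN : 2 ≤ N) (c : ℝ) (k : ℕ) {P L : euc N → ℝ} {d : ℝ}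
    {p q : Fin N → euc N → ℝ} (h1 : ∀ i, HP i P (p i)) (h2 : ∀ i, HP i (p i) (q i))
    (hd : ∀ x, ∑ i, x i * p i x = d * P x) (hL : ∀ x, ∑ i, q i x = L x) :
    HL (fun x => Fk (N / 2 - 1) c k (hs x) * P x)
      (fun x => - (2 * c) * (Fk (N / 2 - 1) c k (hs x) * P x)
        + 2 * (d - k) * (Fk (N / 2 - 1) c (k + 1) (hs x) * P x)
        + Fk (N / 2 - 1) c k (hs x) * L x) := by
  have hν : (0:ℝ) ≤ N / 2 - 1 := by
    have : (2:ℝ) ≤ N := by exact_mod_cast hN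
    linarith
  have hFs := fun k => Fk_smooth hν c k
  have hFd := fun k => Fk_deriv hν c k
  refine HL.of (fun i => ((HP.hs i).comp (hFs k) (hFd k)).mul (h1 i))
    (fun i => ((((HP.hs i).comp (hFs (k+1)) (hFd (k+1))).mul (HP.coord i i)).mul (h1 i)).add
      (((HP.hs i).comp (hFs k) (hFd k)).mul (h2 i))) (by omega) (fun x => ?_)
  have hsq : ∑ i, x i * x i = 2 * hs x := by
    unfold _root_.hs Qf; rw [Finset.mul_sum]
    exact Finset.sum_congr rfl fun i _ => by ring
  simp only [if_true, mul_one]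
  have hrec := Fk_rec hν c k (hs x)
  set A := Fk (N / 2 - 1) c (k + 2) (hs x)
  set B := Fk (N / 2 - 1) c (k + 1) (hs x)
  set C := Fk (N / 2 - 1) c k (hs x)
  have : ∀ i, ((A * x i * x i + B) * P x + B * x i * p i x) + (B * x i * p i x + C * q i x)
      = A * P x * (x i * x i) + B * P x + 2 * B * (x i * p i x) + C * q i x := fun i => by ring
  calc _ = ∑ i, (A * P x * (x i * x i) + B * P x + 2 * B * (x i * p i x) + C * q i x) :=
        Finset.sum_congr rfl fun i _ => this i
    _ = A * P x * (2 * hs x) + N * (B * P x) + 2 * B * (d * P x) + C * L x := by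
        simp only [Finset.sum_add_distrib, ← Finset.mul_sum, hsq, hd, hL, Finset.sum_const,
          Finset.card_univ, Fintype.card_fin, nsmul_eq_mul]
        ring
    _ = _ := by linear_combination P x * hrec

/-- the weights -/
def eps {N : ℕ} (i : Fin N) : ℝ := if i.val = 0 then 1 else if i.val = 1 then -1 else 0

lemma eps_sum {N : ℕ} (hN : 2 ≤ N) (f : ℝ → ℝ) (hf : f 0 = 0) :
    ∑ i : Fin N, f (eps i) = f 1 + f (-1) := by
  obtain ⟨n, rfl⟩ := Nat.exists_eq_add_of_le hN
  rw [show 2 + n = n + 1 + 1 by ring, Fin.sum_univ_succ, Fin.sum_univ_succ]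
  simp [eps, hf]

noncomputable def vf (ν c α β γ t s τ p : ℝ) : ℝ :=
  Fk ν c 0 s + α * t * (Fk ν c 2 s * τ) + t ^ 2 * (β * (Fk ν c 4 s * τ ^ 2 +
    4 * (Fk ν c 3 s * p) + 4 * Fk ν c 2 s) + γ * (2 * Fk ν c 1 s + Fk ν c 2 s * p))

/-- the two quadratic forms -/
noncomputable def tau {N : ℕ} (x : euc N) : ℝ := Qf eps x
noncomputable def ppi {N : ℕ} (x : euc N) : ℝ := Qf (fun i => eps i ^ 2) x

lemma vf_helm {N : ℕ} (hN : 2 ≤ N) (c α β γ t : ℝ) :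
    Helm (2 * c) (fun x : euc N => vf (N / 2 - 1) c α β γ t (hs x) (tau x) (ppi x)) := by
  have hq : ∀ a : Fin N → ℝ, ∀ i, HP i (Qf a) (fun x => 2 * a i * x i) := fun a i => HP.quad i a
  have hl : ∀ a : Fin N → ℝ, ∀ i, HP i (fun x => 2 * a i * x i) (fun _ => 2 * a i) := fun a i =>
    ((HP.const i (2 * a i)).mul (HP.coord i i)).congr (fun x => rfl) (fun x => by simp)
  have hdq : ∀ a : Fin N → ℝ, ∀ x : euc N, ∑ i, x i * (2 * a i * x i) = 2 * Qf a x := by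
    intro a x
    unfold Qf; rw [Finset.mul_sum]
    exact Finset.sum_congr rfl fun i _ => by ring
  have one : ∀ k, HL (fun x : euc N => Fk (N / 2 - 1) c k (hs x) * 1) _ := fun k =>
    HL.term hN c k (P := fun _ => 1) (L := fun _ => 0) (d := 0) (p := fun _ _ => 0)
      (q := fun _ _ => 0) (fun i => HP.const i 1) (fun i => HP.const i 0) (by simp) (by simp)
  have tt : ∀ k, HL (fun x : euc N => Fk (N / 2 - 1) c k (hs x) * tau x) _ := fun k =>
    HL.term hN c k (P := tau) (L := fun _ => 0) (d := 2)
      (fun i => hq eps i) (fun i => hl eps i) (hdq eps) (by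
        intro x; rw [← Finset.mul_sum, eps_sum hN (fun x => x) rfl]; simp)
  have pp : ∀ k, HL (fun x : euc N => Fk (N / 2 - 1) c k (hs x) * ppi x) _ := fun k =>
    HL.term hN c k (P := ppi) (L := fun _ => 4) (d := 2)
      (fun i => hq (fun i => eps i ^ 2) i) (fun i => hl (fun i => eps i ^ 2) i)
      (hdq (fun i => eps i ^ 2)) (by
        intro x; rw [← Finset.mul_sum, eps_sum hN (fun x => x ^ 2) (by simp)]; norm_num)
  have t2 : ∀ k, HL (fun x : euc N => Fk (N / 2 - 1) c k (hs x) * (tau x * tau x)) _ := fun k =>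
    HL.term hN c k (P := fun x => tau x * tau x) (L := fun x => 8 * ppi x) (d := 4)
      (fun i => (hq eps i).mul (hq eps i))
      (fun i => ((hl eps i).mul (hq eps i)).add ((hq eps i).mul (hl eps i)))
      (by
        intro x
        have := hdq eps x
        have e : ∀ i : Fin N, x i * (2 * eps i * x i * Qf eps x + Qf eps x * (2 * eps i * x i))
          = 2 * Qf eps x * (x i * (2 * eps i * x i)) := fun i => by ring
        simp only [tau, e]
        rw [← Finset.mul_sum, this]; ring)
      (by
        intro x
        have e1 : ∑ i : Fin N, (2 * eps i : ℝ) = 0 := by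
          rw [← Finset.mul_sum, eps_sum hN (fun x => x) rfl]; simp
        have e : ∀ i : Fin N, 2 * eps i * Qf eps x + 2 * eps i * x i * (2 * eps i * x i) +
          (2 * eps i * x i * (2 * eps i * x i) + Qf eps x * (2 * eps i))
          = 2 * Qf eps x * (2 * eps i) + 8 * (eps i ^ 2 * x i ^ 2) := fun i => by ring
        simp only [tau, e]
        rw [Finset.sum_add_distrib, ← Finset.mul_sum, e1, ← Finset.mul_sum]
        unfold ppi Qf; ring)
  have H := ((one 0).add ((tt 2).smul (α * t))).add (((((t2 4).add ((pp 3).smul 4)).add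
    ((one 2).smul 4)).smul β |>.add ((((one 1).smul 2).add (pp 2)).smul γ)).smul (t ^ 2))
  refine H.congr (fun x => ?_) (fun x => ?_)
  · unfold vf; ring
  · unfold vf; push_cast; ring

lemma taylor_two {g g' g'' : ℝ → ℝ} (h1 : ∀ x, HasDerivAt g (g' x) x)
    (h2 : ∀ x, HasDerivAt g' (g'' x) x) (hg : ContDiff ℝ 2 g) (z : ℝ) :
    ∃ R : ℝ → ℝ, ContinuousAt R 0 ∧ R 0 = g'' z / 2 ∧
      ∀ h, g (z + h) = g z + h * g' z + h ^ 2 * R h := by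
  have e1 : deriv g = g' := funext fun x => (h1 x).deriv
  have e2 : deriv g' = g'' := funext fun x => (h2 x).deriv
  have ht := taylor_isLittleO (f := g) (x₀ := z) (n := 2) convex_univ (mem_univ z) hg.contDiffOn
  have hev : ∀ x, taylorWithinEval g 2 univ z x = g z + (x - z) * g' z + (x - z) ^ 2 * (g'' z / 2) := by
    intro x
    rw [taylorWithinEval_succ, taylorWithinEval_succ, taylor_within_zero_eval]
    simp [iteratedDerivWithin_univ, iteratedDeriv_succ, e1, e2]
    ring
  simp only [hev, nhdsWithin_univ] at ht
  refine ⟨fun h => if h = 0 then g'' z / 2 else (g (z + h) - g z - h * g' z) / h ^ 2, ?_, by simp, ?_⟩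
  · rw [ContinuousAt]
    simp only [if_true]
    have hz : Tendsto (fun h : ℝ => z + h) (𝓝 0) (𝓝 z) := by
      have : Continuous (fun h : ℝ => z + h) := by fun_prop
      simpa using this.tendsto 0
    have ht2 := (ht.comp_tendsto hz).tendsto_div_nhds_zero
    have ht3 := ht2.add_const (g'' z / 2)
    rw [zero_add] at ht3
    refine ht3.congr fun h => ?_
    simp only [Function.comp]
    by_cases hh : h = 0
    · simp [hh]
    · rw [if_neg hh]
      simp only [add_sub_cancel_left]
      field_simp
      ring
  · intro h
    by_cases hh : h = 0
    · simp [hh]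
    · simp only [if_neg hh]; field_simp; ring

section
variable (n z : ℝ)
noncomputable def cα : ℝ := -1 / (4 * n)
noncomputable def cβ : ℝ := 1 / (32 * n * (n + 1))
noncomputable def cγ : ℝ := 8 * cβ n * (n * (n + 1) - z) / n
noncomputable def cm : ℝ := z / (n ^ 2 * (n + 1)) - 1 / (2 * (n + 1)) - 1 / (n * (n + 1))
end

noncomputable def vb (ν z m t s τ p : ℝ) : ℝ :=
  vf ν (2 * z * (1 + m * t ^ 2)) (cα (ν + 1)) (cβ (ν + 1)) (cγ (ν + 1) z) t s τ p

lemma vb_boundary {ν z : ℝ} (hν : 0 ≤ ν) (hz : 0 < z) (h0 : gB ν z = 0) (m : ℝ) :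
    ∃ W : (ℝ × ℝ) × ℝ → ℝ, (∀ τ p, ContinuousAt W ((τ, p), 0)) ∧
      (∀ τ p, W ((τ, p), 0) = z * gB (ν + 1) z * (cm (ν + 1) z - m)) ∧
      ∀ t τ p, vb ν z m t ((1 - t * τ) / 2) τ p = t ^ 2 * W ((τ, p), t) := by
  obtain ⟨R, hR, hR0, hRe⟩ := taylor_two (g := gB ν) (g' := fun x => - gB (ν + 1) x)
    (g'' := fun x => gB (ν + 1 + 1) x) (fun x => gB_hasDerivAt hν x)
    (fun x => by
      have h := (gB_hasDerivAt (μ := ν + 1) (by positivity) x).neg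
      rw [neg_neg] at h; exact h)
    (contDiff_infty.1 (gB_smooth hν) 2) z
  have hd2 := gB_hasDerivAt (μ := ν + 2) (by positivity) z
  set S : ℝ → ℝ := fun h => dslope (gB (ν + 2)) z (z + h) with hS
  have hSc : ContinuousAt S 0 := by
    have h := continuousAt_dslope_same.2 hd2.differentiableAt
    have h2 : ContinuousAt (fun h : ℝ => z + h) 0 := by fun_prop
    refine ContinuousAt.comp (g := dslope (gB (ν + 2)) z) ?_ h2
    simpa using h
  have hS0 : S 0 = - gB (ν + 3) z := by
    simp only [hS, add_zero, dslope_same, hd2.deriv]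
    rw [show ν + 2 + 1 = ν + 3 by ring]
  have hSe : ∀ h, gB (ν + 2) (z + h) = gB (ν + 2) z + h * S h := by
    intro h
    have := sub_smul_dslope (gB (ν + 2)) z (z + h)
    simp only [smul_eq_mul, add_sub_cancel_left] at this
    simp only [hS]; linarith
  have r0 := gB_rec (μ := ν) hν z
  have r1 := gB_rec (μ := ν + 1) (by positivity) z
  have r2 := gB_rec (μ := ν + 2) (by positivity) z
  rw [h0] at r0
  simp only [show ν + 1 + 1 = ν + 2 by ring] at r1 hR0
  rw [show ν + 1 + 2 = ν + 3 by ring] at r1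
  rw [show ν + 2 + 1 = ν + 3 by ring, show ν + 2 + 2 = ν + 4 by ring] at r2
  simp only [h0] at hRe
  set k : (ℝ × ℝ) × ℝ → ℝ := fun q => z * (-q.1.1 + m * q.2 - m * q.2 ^ 2 * q.1.1) with hk
  have hkc : Continuous k := by fun_prop
  have htk : Continuous (fun q : (ℝ × ℝ) × ℝ => q.2 * k q) := by fun_prop
  have gc : ∀ a : ℝ, 0 ≤ a → Continuous (fun q : (ℝ × ℝ) × ℝ => gB (ν + a) (z + q.2 * k q)) :=
    fun a ha => (gB_smooth (μ := ν + a) (by positivity)).continuous.comp (by fun_prop)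
  have gc1 := gc 1 (by norm_num)
  have gc2 := gc 2 (by norm_num)
  have gc3 := gc 3 (by norm_num)
  have gc4 := gc 4 (by norm_num)
  set c : ℝ → ℝ := fun t => 2 * z * (1 + m * t ^ 2) with hc
  have hcc : Continuous c := by fun_prop
  refine ⟨fun q => -z * gB (ν + 1) z * (m - m * q.2 * q.1.1) + k q ^ 2 * R (q.2 * k q)
    + cα (ν + 1) * q.1.1 * (4 * z ^ 2 * (2 * m * q.2 + m ^ 2 * q.2 ^ 3) * gB (ν + 2) z)
    + cα (ν + 1) * q.1.1 * (c q.2) ^ 2 * k q * S (q.2 * k q)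
    + (cβ (ν + 1) * ((c q.2) ^ 4 * gB (ν + 4) (z + q.2 * k q) * q.1.1 ^ 2
        + 4 * (-(c q.2) ^ 3 * gB (ν + 3) (z + q.2 * k q) * q.1.2)
        + 4 * ((c q.2) ^ 2 * gB (ν + 2) (z + q.2 * k q)))
      + cγ (ν + 1) z * (2 * (-(c q.2) * gB (ν + 1) (z + q.2 * k q))
        + (c q.2) ^ 2 * gB (ν + 2) (z + q.2 * k q) * q.1.2)), ?_, ?_, ?_⟩
  · intro τ p
    have c1 : ContinuousAt (fun q : (ℝ × ℝ) × ℝ => R (q.2 * k q)) ((τ, p), 0) :=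
      ContinuousAt.comp (g := R) (by simpa using hR) htk.continuousAt
    have c2 : ContinuousAt (fun q : (ℝ × ℝ) × ℝ => S (q.2 * k q)) ((τ, p), 0) :=
      ContinuousAt.comp (g := S) (by simpa using hSc) htk.continuousAt
    refine ((((ContinuousAt.add ?_ (ContinuousAt.mul ?_ c1)).add ?_).add
      (ContinuousAt.mul ?_ c2)).add ?_)
    · exact Continuous.continuousAt (by fun_prop)
    · exact Continuous.continuousAt (by fun_prop)
    · exact Continuous.continuousAt (by fun_prop)
    · exact Continuous.continuousAt (by fun_prop)
    · exact Continuous.continuousAt (by fun_prop)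
  · intro τ p
    have hz' := hz.ne'
    have hn : ν + 1 ≠ 0 := by positivity
    have hn2 : ν + 1 + 1 ≠ 0 := by positivity
    have e2 : gB (ν + 2) z = (ν + 1) * gB (ν + 1) z / z := by field_simp; linarith
    have e3 : gB (ν + 3) z = ((ν + 1 + 1) * (ν + 1) - z) * gB (ν + 1) z / z ^ 2 := by
      have : gB (ν + 3) z = ((ν + 1 + 1) * gB (ν + 2) z - gB (ν + 1) z) / z := by
        field_simp; linarith
      rw [this, e2]; field_simp
    have e4 : gB (ν + 4) z = ((ν + 2 + 1) * ((ν + 1 + 1) * (ν + 1) - z) - z * (ν + 1)) * gB (ν + 1) z / z ^ 3 := by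
      have : gB (ν + 4) z = ((ν + 2 + 1) * gB (ν + 3) z - gB (ν + 2) z) / z := by
        field_simp; linarith
      rw [this, e2, e3]; field_simp
    simp only [hk, hc, zero_mul, mul_zero, add_zero, hR0, hS0, e2, e3, e4, cα, cβ, cγ, cm]
    field_simp
    ring
  · intro t τ p
    have hz' := hz.ne'
    have hn : ν + 1 ≠ 0 := by positivity
    have e2 : gB (ν + 2) z = (ν + 1) * gB (ν + 1) z / z := by field_simp; linarith
    have earg : 2 * z * (1 + m * t ^ 2) * ((1 - t * τ) / 2) = z + t * k ((τ, p), t) := by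
      simp only [hk]; ring
    unfold vb vf Fk
    simp only [earg, pow_zero, Nat.cast_zero, add_zero, one_mul]
    norm_num only [Nat.cast_ofNat, Nat.cast_one]
    rw [hRe, hSe (t * k ((τ, p), t)), e2]
    simp only [hk, hc, cα]
    field_simp
    ring

lemma eventually_compact {K : Set (ℝ × ℝ)} (hK : IsCompact K) {W : (ℝ × ℝ) × ℝ → ℝ}
    (hc : ∀ τ p, ContinuousAt W ((τ, p), 0)) (hpos : ∀ τ p, 0 < W ((τ, p), 0)) :
    ∀ᶠ t in 𝓝 (0:ℝ), ∀ q ∈ K, 0 < W (q, t) := by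
  apply hK.eventually_forall_of_forall_eventually
  rintro ⟨τ, p⟩ _
  exact (continuous_swap.tendsto ((0:ℝ), (τ, p))).eventually ((hc τ p).eventually (lt_mem_nhds (hpos τ p)))

lemma vb_deriv {ν : ℝ} (hν : 0 ≤ ν) (z m t τ p s : ℝ) :
    HasDerivAt (fun s => vb ν z m t s τ p) (
      let c := (2 * z * (1 + m * t ^ 2))
      Fk ν c 1 s + cα (ν + 1) * t * (Fk ν c 3 s * τ) + t ^ 2 * (cβ (ν + 1) * (Fk ν c 5 s * τ ^ 2 +
    4 * (Fk ν c 4 s * p) + 4 * Fk ν c 3 s) + cγ (ν + 1) z * (2 * Fk ν c 2 s + Fk ν c 3 s * p))) s := by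
  set c := (2 * z * (1 + m * t ^ 2)) with hc
  have hd := fun k => Fk_deriv hν c k s
  have h := ((hd 0).add (((hd 2).mul_const τ).const_mul (cα (ν + 1) * t))).add
    ((((((hd 4).mul_const (τ ^ 2)).add (((hd 3).mul_const p).const_mul 4)).add
      ((hd 2).const_mul 4)).const_mul (cβ (ν + 1))).add ((((hd 1).const_mul 2).add
      ((hd 2).mul_const p)).const_mul (cγ (ν + 1) z)) |>.const_mul (t ^ 2))
  exact h

lemma vb_mono {ν z : ℝ} (hν : 0 ≤ ν) (hz : 0 < z) (hpos : ∀ y ∈ Icc 0 z, 0 < gB (ν + 1) y)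
    (m : ℝ) {K : Set (ℝ × ℝ)} (hK : IsCompact K) :
    ∀ᶠ t in 𝓝 (0:ℝ), ∀ q ∈ K, ∀ s ∈ Icc 0 ((1 - t * q.1) / 2),
      vb ν z m t ((1 - t * q.1) / 2) q.1 q.2 ≤ vb ν z m t s q.1 q.2 := by
  have hFc : ∀ k, Continuous (fun w : (ℝ × (ℝ × ℝ)) × ℝ =>
      Fk ν (2 * z * (1 + m * w.2 ^ 2)) k (w.1.1 * ((1 - w.2 * w.1.2.1) / 2))) := by
    intro k
    unfold Fk
    have := (gB_smooth (μ := ν + k) (by positivity)).continuous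
    exact Continuous.mul (by fun_prop) (this.comp (by fun_prop))
  set D : (ℝ × (ℝ × ℝ)) × ℝ → ℝ := fun w =>
      let c := (2 * z * (1 + m * w.2 ^ 2))
      let s := w.1.1 * ((1 - w.2 * w.1.2.1) / 2)
      Fk ν c 1 s + cα (ν + 1) * w.2 * (Fk ν c 3 s * w.1.2.1) + w.2 ^ 2 * (cβ (ν + 1) * (Fk ν c 5 s * w.1.2.1 ^ 2 +
    4 * (Fk ν c 4 s * w.1.2.2) + 4 * Fk ν c 3 s) + cγ (ν + 1) z * (2 * Fk ν c 2 s + Fk ν c 3 s * w.1.2.2))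
    with hD
  have hDc : Continuous D := by
    have a1 := hFc 1
    have a2 := hFc 2
    have a3 := hFc 3
    have a4 := hFc 4
    have a5 := hFc 5
    simp only [hD]
    fun_prop
  have hev : ∀ᶠ t in 𝓝 (0:ℝ), ∀ q ∈ (Icc (0:ℝ) 1) ×ˢ K, D (q, t) < 0 := by
    apply (isCompact_Icc.prod hK).eventually_forall_of_forall_eventually
    rintro ⟨σ, τ, p⟩ hq
    refine (continuous_swap.tendsto ((0:ℝ), (σ, τ, p))).eventually
      ((hDc.tendsto ((σ, τ, p), 0)).eventually (gt_mem_nhds ?_))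
    have hσ : σ ∈ Icc (0:ℝ) 1 := hq.1
    have : D ((σ, τ, p), 0) = - (2 * z) * gB (ν + 1) (z * σ) := by
      simp only [hD]
      unfold Fk
      norm_num
      left; congr 1; ring
    rw [this]
    have := hpos (z * σ) ⟨mul_nonneg hz.le hσ.1, by nlinarith [hσ.2]⟩
    nlinarith [mul_pos hz this]
  filter_upwards [hev] with t ht q hq s hs
  have hsub : ∀ s' ∈ Icc 0 ((1 - t * q.1) / 2), deriv (fun s => vb ν z m t s q.1 q.2) s' ≤ 0 := by
    intro s' hs'
    rw [(vb_deriv hν z m t q.1 q.2 s').deriv]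
    rcases (hs'.1.trans hs'.2).eq_or_lt with h0 | h0
    · have e : s' = 0 := le_antisymm (hs'.2.trans h0.symm.le) hs'.1
      have := ht (0, q) ⟨⟨le_rfl, zero_le_one⟩, hq⟩
      simp only [hD, zero_mul] at this
      rw [e]; exact this.le
    · have := ht (s' / ((1 - t * q.1) / 2), q) ⟨⟨by have := hs'.1; positivity, by rw [div_le_one h0]; exact hs'.2⟩, hq⟩
      simp only [hD] at this
      rw [div_mul_cancel₀ _ h0.ne'] at this
      exact this.le
  have hanti : AntitoneOn (fun s => vb ν z m t s q.1 q.2) (Icc 0 ((1 - t * q.1) / 2)) := by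
    apply antitoneOn_of_deriv_nonpos (convex_Icc _ _)
    · exact (Differentiable.continuous fun x => (vb_deriv hν z m t q.1 q.2 x).differentiableAt).continuousOn
    · exact fun x _ => (vb_deriv hν z m t q.1 q.2 x).differentiableAt.differentiableWithinAt
    · intro x hx
      exact hsub x (interior_subset hx)
  exact hanti hs ⟨hs.1.trans hs.2, le_rfl⟩ hs.2

/-- the ellipsoid -/
def Eset (N : ℕ) (t : ℝ) : Set (euc N) := {x | ‖x‖ ^ 2 + t * tau x < 1}

lemma norm_sq_sum {N : ℕ} (x : euc N) : ‖x‖ ^ 2 = ∑ i, x i ^ 2 := by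
  rw [EuclideanSpace.norm_sq_eq]
  exact Finset.sum_congr rfl fun i _ => by rw [Real.norm_eq_abs, sq_abs]

lemma eps_abs {N : ℕ} (i : Fin N) : |eps i| ≤ 1 := by
  unfold eps; split_ifs <;> simp

lemma abs_tau_le {N : ℕ} (x : euc N) : |tau x| ≤ ‖x‖ ^ 2 := by
  rw [norm_sq_sum]
  unfold tau Qf
  refine (Finset.abs_sum_le_sum_abs _ _).trans (Finset.sum_le_sum fun i _ => ?_)
  rw [abs_mul, abs_of_nonneg (sq_nonneg (x i))]
  nlinarith [eps_abs i, sq_nonneg (x i)]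

lemma ppi_nonneg {N : ℕ} (x : euc N) : 0 ≤ ppi x := by
  unfold ppi Qf; positivity

lemma ppi_le {N : ℕ} (x : euc N) : ppi x ≤ ‖x‖ ^ 2 := by
  rw [norm_sq_sum]
  unfold ppi Qf
  refine Finset.sum_le_sum fun i _ => ?_
  have := eps_abs i
  have : eps i ^ 2 ≤ 1 := by rw [← sq_abs]; nlinarith [abs_nonneg (eps i)]
  nlinarith [sq_nonneg (x i)]

lemma tau_continuous {N : ℕ} : Continuous (tau : euc N → ℝ) := by
  unfold tau Qf; fun_prop

lemma Eset_open (N : ℕ) (t : ℝ) : IsOpen (Eset N t) :=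
  isOpen_lt (by have := tau_continuous (N := N); fun_prop) continuous_const

lemma le_two_of {N : ℕ} {t : ℝ} (ht : |t| ≤ 1 / 2) {x : euc N} (hx : ‖x‖ ^ 2 + t * tau x ≤ 1) :
    ‖x‖ ^ 2 ≤ 2 := by
  have h1 := abs_tau_le x
  have h2 : |t * tau x| ≤ 1 / 2 * ‖x‖ ^ 2 := by
    rw [abs_mul]; gcongr
  have := neg_abs_le (t * tau x)
  linarith

lemma Eset_bounded {N : ℕ} {t : ℝ} (ht : |t| ≤ 1 / 2) : Bornology.IsBounded (Eset N t) := by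
  refine isBounded_iff_forall_norm_le.2 ⟨2, fun x hx => ?_⟩
  have := le_two_of ht (le_of_lt hx)
  nlinarith [norm_nonneg x]

lemma Eset_frontier {N : ℕ} {t : ℝ} {x : euc N} (hx : x ∈ frontier (Eset N t)) :
    ‖x‖ ^ 2 + t * tau x = 1 :=
  frontier_lt_subset_eq (f := fun x : euc N => ‖x‖ ^ 2 + t * tau x) (g := fun _ => (1:ℝ))
    (by have := tau_continuous (N := N); fun_prop) continuous_const hx

/-- parameter box -/
def Kbox : Set (ℝ × ℝ) := Icc (-2) 2 ×ˢ Icc 0 2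

lemma Kbox_compact : IsCompact Kbox := isCompact_Icc.prod isCompact_Icc

lemma mem_Kbox {N : ℕ} {x : euc N} (h : ‖x‖ ^ 2 ≤ 2) : (tau x, ppi x) ∈ Kbox := by
  have h1 := abs_le.1 (abs_tau_le x)
  exact ⟨⟨by simp only; linarith, by simp only; linarith⟩, ⟨ppi_nonneg x, (ppi_le x).trans h⟩⟩

lemma hν_of {N : ℕ} (hN : 2 ≤ N) : (0:ℝ) ≤ N / 2 - 1 := by
  have : (2:ℝ) ≤ N := by exact_mod_cast hN
  linarith

lemma vb_helm {N : ℕ} (hN : 2 ≤ N) (z m t : ℝ) :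
    Helm (4 * z * (1 + m * t ^ 2))
      (fun x : euc N => vb (N / 2 - 1) z m t (hs x) (tau x) (ppi x)) := by
  have := vf_helm hN (2 * z * (1 + m * t ^ 2)) (cα (N / 2 - 1 + 1)) (cβ (N / 2 - 1 + 1))
    (cγ (N / 2 - 1 + 1) z) t
  rw [show 4 * z * (1 + m * t ^ 2) = 2 * (2 * z * (1 + m * t ^ 2)) by ring]
  exact this

lemma eig_lower {N : ℕ} (hN : 2 ≤ N) {z : ℝ} (hz : 0 < z) (h0 : gB (N / 2 - 1) z = 0)
    (hpos : ∀ y ∈ Icc 0 z, 0 < gB (N / 2 - 1 + 1) y) {m : ℝ} (hm : m < cm (N / 2 - 1 + 1) z) :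
    ∀ᶠ t in 𝓝[>] (0:ℝ), (raySet N (Eset N t)).Nonempty →
      4 * z * (1 + m * t ^ 2) ≤ firstEigenvalue N (Eset N t) := by
  have hν := hν_of hN
  obtain ⟨W, hWc, hW0, hWe⟩ := vb_boundary hν hz h0 m
  have hg1 := hpos z ⟨hz.le, le_rfl⟩
  have ev1 := eventually_compact Kbox_compact hWc (fun τ p => by
    rw [hW0]; have := sub_pos.2 hm; positivity)
  have ev2 := vb_mono hν hz hpos m Kbox_compact
  have ev3 : ∀ᶠ t in 𝓝 (0:ℝ), |t| ≤ 1 / 2 := by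
    have : Tendsto (fun t : ℝ => |t|) (𝓝 0) (𝓝 0) := by simpa using (continuous_abs.tendsto (0:ℝ))
    exact this.eventually (ge_mem_nhds (by norm_num))
  filter_upwards [ev1.filter_mono inf_le_left, ev2.filter_mono inf_le_left,
    ev3.filter_mono inf_le_left, self_mem_nhdsWithin] with t h1 h2 h3 h4 hne
  refine firstEigenvalue_lower (vb_helm hN z m t) (fun x hx => ?_) hne
  have hK := mem_Kbox (le_two_of h3 (le_of_lt hx))
  have hpos1 := h1 _ hK
  have ht : 0 < t := h4
  have hx' : ‖x‖ ^ 2 + t * tau x < 1 := hx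
  have hmono := h2 _ hK (hs x) ⟨by rw [hs_eq]; positivity, by rw [hs_eq]; simp only; linarith⟩
  refine lt_of_lt_of_le ?_ hmono
  simp only
  rw [hWe]; positivity

lemma eig_upper {N : ℕ} (hN : 2 ≤ N) {z : ℝ} (hz : 0 < z) (h0 : gB (N / 2 - 1) z = 0)
    (hpos : ∀ y ∈ Icc 0 z, 0 < gB (N / 2 - 1 + 1) y) {m : ℝ} (hm : cm (N / 2 - 1 + 1) z < m) :
    ∀ᶠ t in 𝓝[>] (0:ℝ), (raySet N (Eset N t)).Nonempty ∧
      firstEigenvalue N (Eset N t) ≤ 4 * z * (1 + m * t ^ 2) := by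
  have hν := hν_of hN
  obtain ⟨W, hWc, hW0, hWe⟩ := vb_boundary hν hz h0 m
  have hg1 := hpos z ⟨hz.le, le_rfl⟩
  have ev1 := eventually_compact (W := fun q => - W q) Kbox_compact (fun τ p => (hWc τ p).neg)
    (fun τ p => by
      rw [hW0]; have := mul_pos (mul_pos hz hg1) (sub_pos.2 hm); linarith)
  have ev3 : ∀ᶠ t in 𝓝 (0:ℝ), |t| ≤ 1 / 2 := by
    have : Tendsto (fun t : ℝ => |t|) (𝓝 0) (𝓝 0) := by simpa using (continuous_abs.tendsto (0:ℝ))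
    exact this.eventually (ge_mem_nhds (by norm_num))
  have ev2 : ∀ᶠ t in 𝓝 (0:ℝ), 0 < 1 + m * t ^ 2 := by
    have h : Continuous (fun t : ℝ => 1 + m * t ^ 2) := by fun_prop
    exact (h.tendsto 0).eventually (lt_mem_nhds (by norm_num))
  have ev4 : ∀ᶠ t in 𝓝 (0:ℝ), 0 < vb (N / 2 - 1) z m t 0 0 0 := by
    have h : Continuous (fun t : ℝ => vb (N / 2 - 1) z m t 0 0 0) := by
      unfold vb vf Fk; simp only [mul_zero]; fun_prop
    refine (h.tendsto 0).eventually (lt_mem_nhds ?_)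
    unfold vb vf Fk
    simpa using gB_zero hν
  filter_upwards [ev1.filter_mono inf_le_left, ev2.filter_mono inf_le_left,
    ev3.filter_mono inf_le_left, ev4.filter_mono inf_le_left, self_mem_nhdsWithin] with t h1 h2 h3 h4 h5
  have ht : 0 < t := h5
  have t0 : tau (0 : euc N) = 0 := by simp [tau, Qf]
  refine firstEigenvalue_upper (by positivity) (vb_helm hN z m t) (Eset_open N t)
    (Eset_bounded h3) (fun x hx => ?_) (x0 := 0) ?_ ?_
  · have hx' := Eset_frontier hx
    have hK := mem_Kbox (le_two_of h3 hx'.le)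
    have hpos1 := h1 _ hK
    have : hs x = (1 - t * tau x) / 2 := by rw [hs_eq]; linarith
    rw [this, hWe]
    nlinarith [sq_nonneg t]
  · simp [Eset, t0]
  · have e1 : hs (0 : euc N) = 0 := by simp [hs, Qf]
    have e2 : ppi (0 : euc N) = 0 := by simp [ppi, Qf]
    simp only [e1, e2, t0]; exact h4

lemma eig_asymp {N : ℕ} (hN : 2 ≤ N) {z : ℝ} (hz : 0 < z) (h0 : gB (N / 2 - 1) z = 0)
    (hpos : ∀ y ∈ Icc 0 z, 0 < gB (N / 2 - 1 + 1) y) :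
    Tendsto (fun t => (firstEigenvalue N (Eset N t) / (4 * z) - 1) / t ^ 2) (𝓝[>] (0:ℝ))
      (𝓝 (cm (N / 2 - 1 + 1) z)) := by
  rw [tendsto_order]
  constructor
  · intro a ha
    obtain ⟨m, hm1, hm2⟩ := exists_between ha
    filter_upwards [eig_lower hN hz h0 hpos hm2, eig_upper hN hz h0 hpos (lt_add_one _),
      self_mem_nhdsWithin] with t h1 h2 h3
    have ht : 0 < t := h3
    have := h1 h2.1
    refine hm1.trans_le ?_
    rw [le_div_iff₀ (by positivity), le_sub_iff_add_le, le_div_iff₀ (by positivity)]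
    linarith
  · intro a ha
    obtain ⟨m, hm1, hm2⟩ := exists_between ha
    filter_upwards [eig_upper hN hz h0 hpos hm1, self_mem_nhdsWithin] with t h2 h3
    have ht : 0 < t := h3
    refine lt_of_le_of_lt ?_ hm2
    rw [div_le_iff₀ (by positivity), sub_le_iff_le_add, div_le_iff₀ (by positivity)]
    linarith [h2.2]

lemma eig_ball {N : ℕ} (hN : 2 ≤ N) {z : ℝ} (hz : 0 < z) (h0 : gB (N / 2 - 1) z = 0)
    (hpos : ∀ y ∈ Ico 0 z, 0 < gB (N / 2 - 1) y) {R : ℝ} (hR : 0 < R) :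
    firstEigenvalue N (ball (0 : euc N) R) = 4 * z / R ^ 2 := by
  have hν := hν_of hN
  have hv := vb_helm hN (z / R ^ 2) 0 0
  have hval : ∀ x : euc N, vb (N / 2 - 1) (z / R ^ 2) 0 0 (hs x) (tau x) (ppi x)
      = gB (N / 2 - 1) (z * (‖x‖ / R) ^ 2) := by
    intro x
    unfold vb vf Fk
    simp only [hs_eq]
    norm_num
    congr 1; field_simp
  have e : 4 * (z / R ^ 2) * (1 + 0 * 0 ^ 2) = 4 * z / R ^ 2 := by ring
  rw [e] at hv
  have hfr : ∀ x ∈ frontier (ball (0 : euc N) R),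
      vb (N / 2 - 1) (z / R ^ 2) 0 0 (hs x) (tau x) (ppi x) ≤ 0 := by
    intro x hx
    rw [frontier_ball _ hR.ne'] at hx
    have : ‖x‖ = R := by simpa using hx
    rw [hval, this, div_self hR.ne']
    simp [h0]
  have hp : ∀ x ∈ ball (0 : euc N) R,
      0 < vb (N / 2 - 1) (z / R ^ 2) 0 0 (hs x) (tau x) (ppi x) := by
    intro x hx
    have hx' : ‖x‖ < R := by simpa using hx
    rw [hval]
    apply hpos
    have h1 : ‖x‖ / R < 1 := (div_lt_one hR).2 hx'
    have h2 : 0 ≤ ‖x‖ / R := by positivity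
    refine ⟨by positivity, ?_⟩
    have : (‖x‖ / R) ^ 2 < 1 := by nlinarith
    nlinarith
  have h0m : (0 : euc N) ∈ ball (0 : euc N) R := mem_ball_self hR
  obtain ⟨hne, hle⟩ := firstEigenvalue_upper (by positivity) hv isOpen_ball isBounded_ball hfr h0m
    (hp 0 h0m)
  exact le_antisymm hle (firstEigenvalue_lower hv hp hne)

lemma normDet_restrict {E : Type*} [NormedAddCommGroup E] [InnerProductSpace ℝ E]
    [FiniteDimensional ℝ E] (T : E →ₗ[ℝ] E) (x0 w : E) (hx : ‖x0‖ = 1) (hw : w ≠ 0)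
    (hTw : ∀ v, ⟪T v, w⟫ = ⟪v, x0⟫) :
    (T ∘ₗ ((ℝ ∙ x0)ᗮ).subtype).normDet = |LinearMap.det T| * ‖w‖ := by
  have hw' : 0 < ‖w‖ := norm_pos_iff.2 hw
  set n : E := ‖w‖⁻¹ • w with hn
  have hn1 : ‖n‖ = 1 := by rw [hn, norm_smul, norm_inv, norm_norm, inv_mul_cancel₀ hw'.ne']
  set Q := (ℝ ∙ (n - x0))ᗮ.reflection with hQ
  have hQn : Q n = x0 := Submodule.reflection_sub (by rw [hn1, hx])
  set H := (ℝ ∙ x0)ᗮ with hH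
  set e : E →ₗ[ℝ] E := Q.toLinearEquiv.toLinearMap ∘ₗ T with he
  have hin : ∀ v, ⟪e v, x0⟫ = ‖w‖⁻¹ * ⟪v, x0⟫ := by
    intro v
    have : ⟪e v, x0⟫ = ⟪Q (T v), Q n⟫ := by rw [hQn]; rfl
    rw [this, LinearIsometryEquiv.inner_map_map, hn, inner_smul_right, hTw]
  have hmem : ∀ v, v ∈ H ↔ ⟪v, x0⟫ = 0 := by
    intro v; rw [hH, Submodule.mem_orthogonal_singleton_iff_inner_left]
  have hmap : H ≤ H.comap e := by
    intro v hv
    rw [Submodule.mem_comap, hmem, hin, (hmem v).1 hv, mul_zero]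
  have hdet := LinearMap.det_eq_det_mul_det H e hmap
  have hq : H.mapQ H e hmap = ‖w‖⁻¹ • LinearMap.id := by
    ext v
    simp only [LinearMap.comp_apply, Submodule.mkQ_apply, Submodule.mapQ_apply, LinearMap.smul_apply,
      LinearMap.id_apply]
    rw [← Submodule.Quotient.mk_smul, Submodule.Quotient.eq, hmem, inner_sub_left, hin,
      inner_smul_left]
    simp
  have hx0 : x0 ≠ 0 := by intro h; rw [h, norm_zero] at hx; exact zero_ne_one hx
  have hfr : Module.finrank ℝ (E ⧸ H) = 1 := by
    have h1 := Submodule.finrank_quotient_add_finrank H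
    have h2 := Submodule.finrank_add_finrank_orthogonal (ℝ ∙ x0)
    rw [finrank_span_singleton hx0] at h2
    rw [hH] at h1 ⊢
    omega
  rw [hq, LinearMap.det_smul, hfr, LinearMap.det_id, pow_one, mul_one] at hdet
  have hdetQ : |LinearMap.det e| = |LinearMap.det T| := by
    rw [← LinearMap.normDet_eq_abs_det, ← LinearMap.normDet_eq_abs_det, he,
      LinearMap.normDet_comp_of_finrank_eq _ _ rfl]
    have := LinearIsometry.normDet_eq_one (Q.toLinearIsometry)
    have h2 : Q.toLinearEquiv.toLinearMap.normDet = 1 := this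
    rw [h2, one_mul]
  have h3 : (e ∘ₗ H.subtype).normDet = (T ∘ₗ H.subtype).normDet := by
    rw [he, LinearMap.comp_assoc, LinearMap.normDet_comp]
    have := LinearIsometry.normDet_eq_one
      (Q.toLinearIsometry.comp (T ∘ₗ H.subtype).range.subtypeₗᵢ)
    have h2 : (Q.toLinearEquiv.toLinearMap.domRestrict (T ∘ₗ H.subtype).range).normDet = 1 := this
    rw [h2, one_mul]
  have h4 : (e.restrict (p := H) (q := H) (fun x hx => hmap hx)).normDet = (e ∘ₗ H.subtype).normDet :=
    LinearMap.normDet_codRestrict _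
  rw [← h3, ← h4, LinearMap.normDet_eq_abs_det, ← hdetQ, hdet, abs_mul,
    abs_of_pos (inv_pos.2 hw'), mul_assoc, inv_mul_cancel₀ hw'.ne', mul_one]

section hausdorff
variable {E F X : Type*} [NormedAddCommGroup E] [MeasurableSpace E] [BorelSpace E]
  [NormedAddCommGroup F] [MeasurableSpace F] [BorelSpace F]

lemma haus_le_of_dist (f : X → E) (g : X → F) (A : Set X) (K : NNReal) {d : ℝ} (hd : 0 ≤ d)
    (h : ∀ x ∈ A, ∀ y ∈ A, ‖f x - f y‖ ≤ K * ‖g x - g y‖) :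
    μH[d] (f '' A) ≤ (K : ENNReal) ^ d * μH[d] (g '' A) := by
  classical
  rcases A.eq_empty_or_nonempty with rfl | ⟨a, ha⟩
  · simp
  have : Nonempty X := ⟨a⟩
  set k := f ∘ Function.invFunOn g A with hk
  have hm : ∀ p ∈ g '' A, Function.invFunOn g A p ∈ A ∧ g (Function.invFunOn g A p) = p :=
    fun p hp => ⟨Function.invFunOn_mem hp, Function.invFunOn_eq hp⟩
  have hL : LipschitzOnWith K k (g '' A) := by
    apply LipschitzOnWith.of_dist_le_mul
    intro p hp q hq
    rw [dist_eq_norm, dist_eq_norm]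
    have := h _ (hm p hp).1 _ (hm q hq).1
    rwa [(hm p hp).2, (hm q hq).2] at this
  have himg : f '' A ⊆ k '' (g '' A) := by
    rintro _ ⟨x, hx, rfl⟩
    refine ⟨g x, ⟨x, hx, rfl⟩, ?_⟩
    have h1 := hm (g x) ⟨x, hx, rfl⟩
    have := h _ h1.1 _ hx
    rw [h1.2, sub_self, norm_zero, mul_zero] at this
    exact sub_eq_zero.1 (norm_le_zero_iff.1 this)
  exact (measure_mono himg).trans (hL.hausdorffMeasure_image_le hd)

end hausdorff

section area
variable {E : Type*} [NormedAddCommGroup E] [InnerProductSpace ℝ E] [FiniteDimensional ℝ E]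
  [MeasurableSpace E] [BorelSpace E]

/-- projection to the tangent hyperplane, as an endomorphism -/
noncomputable def prj (x0 : E) (v : E) : E := v - ⟪v, x0⟫ • x0

end area

section area
variable {E : Type*} [NormedAddCommGroup E] [InnerProductSpace ℝ E]

lemma sphere_inner_le {x0 x y : E} {r : ℝ} (hx : ‖x‖ = 1) (hy : ‖y‖ = 1)
    (hxr : ‖x - x0‖ ≤ r) (hyr : ‖y - x0‖ ≤ r) : |⟪x - y, x0⟫| ≤ r * ‖x - y‖ := by
  have h1 : ⟪x - y, x + y⟫ = 0 := by
    rw [inner_sub_left, inner_add_right, inner_add_right, real_inner_self_eq_norm_sq,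
      real_inner_self_eq_norm_sq, hx, hy, real_inner_comm x y]; ring
  have h2 : ⟪x - y, x0⟫ = - ⟪x - y, (1/2 : ℝ) • ((x - x0) + (y - x0))⟫ := by
    have : (1/2 : ℝ) • ((x - x0) + (y - x0)) = (1/2 : ℝ) • (x + y) - x0 := by module
    rw [this, inner_sub_right, inner_smul_right, h1]; ring
  rw [h2, abs_neg]
  refine (abs_real_inner_le_norm _ _).trans ?_
  rw [mul_comm]
  refine mul_le_mul_of_nonneg_right ?_ (norm_nonneg _)
  rw [norm_smul]
  have := norm_add_le (x - x0) (y - x0)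
  norm_num
  linarith

lemma prj_sub (x0 x y : E) : prj x0 x - prj x0 y = prj x0 (x - y) := by
  simp only [prj, inner_sub_left]; module

lemma prj_bounds (T : E →ₗ[ℝ] E) {M r : ℝ} (hM : 0 ≤ M) (hTM : ∀ v, ‖T v‖ ≤ M * ‖v‖)
    (hMT : ∀ v, ‖v‖ ≤ M * ‖T v‖) {x0 v : E} (hx0 : ‖x0‖ = 1) (hr : 0 ≤ r)
    (hv : |⟪v, x0⟫| ≤ r * ‖v‖) {K : ℝ} (hδ : r * M ^ 2 < 1) (hK : 1 ≤ K * (1 - r * M ^ 2)) :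
    ‖T v‖ ≤ K * ‖T (prj x0 v)‖ ∧ ‖T (prj x0 v)‖ ≤ K * ‖T v‖ := by
  have h1 : T (prj x0 v) = T v - ⟪v, x0⟫ • T x0 := by simp [prj]
  have h2 : ‖⟪v, x0⟫ • T x0‖ ≤ r * M ^ 2 * ‖T v‖ := by
    rw [norm_smul, Real.norm_eq_abs]
    have hT0 := hTM x0
    rw [hx0, mul_one] at hT0
    calc |⟪v, x0⟫| * ‖T x0‖ ≤ (r * ‖v‖) * M := by gcongr
      _ ≤ (r * (M * ‖T v‖)) * M := by gcongr; exact hMT v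
      _ = _ := by ring
  have h3 : ‖T v‖ ≤ ‖T (prj x0 v)‖ + ‖⟪v, x0⟫ • T x0‖ := by
    rw [h1]; simpa using norm_add_le (T v - ⟪v, x0⟫ • T x0) (⟪v, x0⟫ • T x0)
  have h4 : ‖T (prj x0 v)‖ ≤ ‖T v‖ + ‖⟪v, x0⟫ • T x0‖ := by
    rw [h1]; exact norm_sub_le _ _
  have hδ0 : 0 ≤ r * M ^ 2 := by positivity
  set δ := r * M ^ 2
  have hK0 : 0 ≤ K := by
    by_contra hh
    nlinarith
  have hK1 : 1 + δ ≤ K := by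
    by_contra hh
    nlinarith [sq_nonneg δ]
  constructor
  · have h5 : (1 - δ) * ‖T v‖ ≤ ‖T (prj x0 v)‖ := by linarith
    calc ‖T v‖ = 1 * ‖T v‖ := by ring
      _ ≤ (K * (1 - δ)) * ‖T v‖ := by gcongr
      _ = K * ((1 - δ) * ‖T v‖) := by ring
      _ ≤ _ := by gcongr
  · calc _ ≤ (1 + δ) * ‖T v‖ := by linarith
      _ ≤ _ := by gcongr

lemma finrank_perp {d : ℕ} (hd : Module.finrank ℝ E = d + 1) {x0 : E} (hx0 : ‖x0‖ = 1) :
    Module.finrank ℝ ((ℝ ∙ x0)ᗮ) = d := by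
  have : Fact (Module.finrank ℝ E = d + 1) := ⟨hd⟩
  apply Submodule.finrank_orthogonal_span_singleton
  intro h; rw [h, norm_zero] at hx0; exact zero_ne_one hx0

lemma prj_mem {x0 : E} (hx0 : ‖x0‖ = 1) (v : E) : prj x0 v ∈ (ℝ ∙ x0)ᗮ := by
  rw [Submodule.mem_orthogonal_singleton_iff_inner_left, prj, inner_sub_left, inner_smul_left,
    real_inner_self_eq_norm_sq, hx0]; simp

variable [FiniteDimensional ℝ E] [MeasurableSpace E] [BorelSpace E]

lemma haus_T_prj {d : ℕ} (hd : Module.finrank ℝ E = d + 1) (T W : E →ₗ[ℝ] E) {x0 : E}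
    (hx0 : ‖x0‖ = 1) (hW : W x0 ≠ 0) (hTW : ∀ v, ⟪T v, W x0⟫ = ⟪v, x0⟫) (A : Set E) :
    μH[(d:ℝ)] ((fun x => T (prj x0 x)) '' A) =
      ENNReal.ofReal (|LinearMap.det T| * ‖W x0‖) * μH[(d:ℝ)] (prj x0 '' A) := by
  set H := (ℝ ∙ x0)ᗮ with hH
  set B : Set H := (fun x => (⟨prj x0 x, prj_mem hx0 x⟩ : H)) '' A with hB
  have hfr := finrank_perp hd hx0
  have h1 := LinearMap.hausdorffMeasure_image (T ∘ₗ H.subtype) B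
  have h2 := LinearMap.hausdorffMeasure_image (H.subtype) B
  rw [LinearMap.normDet_subtype] at h2
  rw [normDet_restrict T x0 (W x0) hx0 hW hTW] at h1
  rw [hfr] at h1 h2
  have e1 : (T ∘ₗ H.subtype) '' B = (fun x => T (prj x0 x)) '' A := by
    rw [hB, image_image]; rfl
  have e2 : H.subtype '' B = prj x0 '' A := by
    rw [hB, image_image]; rfl
  rw [← e1, ← e2, h1, h2]; simp

lemma piece_est {d : ℕ} (hd : Module.finrank ℝ E = d + 1) (T W : E →ₗ[ℝ] E) {M r : ℝ}
    (hM : 1 ≤ M) (hTM : ∀ v, ‖T v‖ ≤ M * ‖v‖)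
    (hMT : ∀ v, ‖v‖ ≤ M * ‖T v‖) {x0 : E} (hx0 : ‖x0‖ = 1) (hr : 0 ≤ r)
    (hW : W x0 ≠ 0) (hTW : ∀ v, ⟪T v, W x0⟫ = ⟪v, x0⟫)
    {K : NNReal} (hδ : r * M ^ 2 < 1) (hK : 1 ≤ K * (1 - r * M ^ 2))
    (A : Set E) (hA : ∀ x ∈ A, ‖x‖ = 1 ∧ ‖x - x0‖ ≤ r) :
    μH[(d:ℝ)] (T '' A) ≤ (K:ENNReal) ^ (d:ℝ) * ((K:ENNReal) ^ (d:ℝ) *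
      (ENNReal.ofReal (|LinearMap.det T| * ‖W x0‖) * μH[(d:ℝ)] A)) ∧
    ENNReal.ofReal (|LinearMap.det T| * ‖W x0‖) * μH[(d:ℝ)] A ≤
      (K:ENNReal) ^ (d:ℝ) * ((K:ENNReal) ^ (d:ℝ) * μH[(d:ℝ)] (T '' A)) ∧
    μH[(d:ℝ)] A ≤ (K:ENNReal) ^ (d:ℝ) * μH[(d:ℝ)] (prj x0 '' A) := by
  have hd0 : (0:ℝ) ≤ d := Nat.cast_nonneg d
  have hvv : ∀ x ∈ A, ∀ y ∈ A, |⟪x - y, x0⟫| ≤ r * ‖x - y‖ := fun x hx y hy =>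
    sphere_inner_le (hA x hx).1 (hA y hy).1 (hA x hx).2 (hA y hy).2
  have hK1 : 1 ≤ (K:ℝ) * (1 - r * 1 ^ 2) := by
    refine hK.trans ?_
    gcongr
  have hδ1 : r * (1:ℝ) ^ 2 < 1 := lt_of_le_of_lt (by gcongr) hδ
  have bT := fun x hx y hy => prj_bounds T (by linarith) hTM hMT hx0 hr (hvv x hx y hy) hδ hK
  have bI := fun x hx y hy => prj_bounds LinearMap.id zero_le_one (by simp) (by simp) hx0 hr
    (hvv x hx y hy) hδ1 hK1
  have e1 := haus_T_prj hd T W hx0 hW hTW A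
  have i1 : μH[(d:ℝ)] (T '' A) ≤ (K:ENNReal) ^ (d:ℝ) * μH[(d:ℝ)] ((fun x => T (prj x0 x)) '' A) := by
    apply haus_le_of_dist _ _ _ _ hd0
    intro x hx y hy
    have := (bT x hx y hy).1
    rwa [← prj_sub, map_sub, map_sub] at this
  have i2 : μH[(d:ℝ)] ((fun x => T (prj x0 x)) '' A) ≤ (K:ENNReal) ^ (d:ℝ) * μH[(d:ℝ)] (T '' A) := by
    apply haus_le_of_dist _ _ _ _ hd0
    intro x hx y hy
    have := (bT x hx y hy).2
    rwa [← prj_sub, map_sub, map_sub] at this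
  have i3 : μH[(d:ℝ)] ((fun x => x) '' A) ≤ (K:ENNReal) ^ (d:ℝ) * μH[(d:ℝ)] (prj x0 '' A) := by
    apply haus_le_of_dist _ _ _ _ hd0
    intro x hx y hy
    have := (bI x hx y hy).1
    rwa [← prj_sub] at this
  have i4 : μH[(d:ℝ)] (prj x0 '' A) ≤ (K:ENNReal) ^ (d:ℝ) * μH[(d:ℝ)] ((fun x => x) '' A) := by
    apply haus_le_of_dist _ _ _ _ hd0
    intro x hx y hy
    have := (bI x hx y hy).2
    rwa [← prj_sub] at this
  rw [image_id'] at i3 i4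
  refine ⟨?_, ?_, i3⟩
  · refine i1.trans ?_
    rw [e1, mul_left_comm ((K:ENNReal) ^ (d:ℝ)) (ENNReal.ofReal _) (μH[(d:ℝ)] A)]
    gcongr
  · refine (mul_le_mul_right i3 _).trans ?_
    rw [mul_left_comm, ← e1]
    gcongr

end area

section area
variable {E : Type*} [NormedAddCommGroup E] [InnerProductSpace ℝ E]
variable [FiniteDimensional ℝ E] [MeasurableSpace E] [BorelSpace E]

lemma sphere_finite {d : ℕ} (hd : Module.finrank ℝ E = d + 1) :
    μH[(d:ℝ)] (sphere (0:E) 1) < ⊤ := by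
  apply IsCompact.measure_lt_top_of_nhdsWithin (isCompact_sphere 0 1)
  intro x0 hx0
  rw [mem_sphere_zero_iff_norm] at hx0
  refine ⟨sphere 0 1 ∩ closedBall x0 (1/2), inter_mem_nhdsWithin _ (closedBall_mem_nhds _ (by norm_num)), ?_⟩
  have hne : x0 ≠ 0 := by intro h; rw [h, norm_zero] at hx0; exact zero_ne_one hx0
  have h := (piece_est hd (LinearMap.id : E →ₗ[ℝ] E) LinearMap.id (M := 1) (r := 1/2) le_rfl
    (by simp) (by simp) hx0 (by norm_num) (by simpa using hne) (by simp) (K := 2)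
    (by norm_num) (by norm_num) (sphere 0 1 ∩ closedBall x0 (1/2)) (by
      rintro x ⟨h1, h2⟩
      rw [mem_closedBall, dist_eq_norm] at h2
      exact ⟨by simpa using h1, h2⟩)).2.2
  refine lt_of_le_of_lt h (ENNReal.mul_lt_top (by simp) ?_)
  set A := sphere 0 1 ∩ closedBall x0 (1/2)
  set H := (ℝ ∙ x0)ᗮ with hH
  set B : Set H := (fun x => (⟨prj x0 x, prj_mem hx0 x⟩ : H)) '' A with hB
  have hfr := finrank_perp hd hx0
  have h2 := LinearMap.hausdorffMeasure_image (H.subtype) B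
  rw [LinearMap.normDet_subtype] at h2
  have e2 : H.subtype '' B = prj x0 '' A := by
    rw [hB, image_image]; rfl
  have hb : Bornology.IsBounded B := by
    apply isBounded_iff_forall_norm_le.2 ⟨2, ?_⟩
    rintro _ ⟨x, hx, rfl⟩
    have hx1 : ‖x‖ = 1 := by simpa using hx.1
    show ‖prj x0 x‖ ≤ 2
    refine (norm_sub_le _ _).trans ?_
    rw [norm_smul, hx1, hx0, Real.norm_eq_abs]
    have := abs_real_inner_le_norm x x0
    rw [hx1, hx0] at this
    linarith
  have hfin := hb.measure_lt_top (μ := μH[(Module.finrank ℝ H : ℝ)])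
  rw [e2, hfr] at h2
  rw [hfr] at hfin
  rw [h2]
  exact ENNReal.mul_lt_top (by simp) hfin

lemma sphere_pos {d : ℕ} (hd : Module.finrank ℝ E = d + 1) :
    0 < μH[(d:ℝ)] (sphere (0:E) 1) := by
  have : Nontrivial E := Module.nontrivial_of_finrank_pos (R := ℝ) (by omega)
  obtain ⟨x0, hx0⟩ := exists_norm_eq E (zero_le_one)
  set H := (ℝ ∙ x0)ᗮ with hH
  have hfr := finrank_perp hd hx0
  have h1 := hausdorffMeasure_orthogonalProjectionOnto_le H (d:ℝ) (sphere (0:E) 1) (Nat.cast_nonneg d)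
  refine lt_of_lt_of_le ?_ h1
  have hpos : 0 < μH[(Module.finrank ℝ H : ℝ)] (ball (0:H) 1) :=
    measure_ball_pos _ _ one_pos
  rw [hfr] at hpos
  refine lt_of_lt_of_le hpos (measure_mono ?_)
  intro h hh
  rw [mem_ball_zero_iff] at hh
  have hin : ⟪(h:E), x0⟫ = 0 := (Submodule.mem_orthogonal_singleton_iff_inner_left).1 h.2
  have hh' : ‖(h:E)‖ < 1 := hh
  refine ⟨(h:E) + Real.sqrt (1 - ‖(h:E)‖^2) • x0, ?_, ?_⟩
  · rw [mem_sphere_zero_iff_norm, ← sq_eq_sq₀ (norm_nonneg _) zero_le_one, norm_add_sq_real,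
      inner_smul_right, hin, norm_smul, hx0, mul_one, Real.norm_eq_abs, sq_abs, Real.sq_sqrt]
    · ring
    · nlinarith [norm_nonneg (h:E)]
  · rw [map_add, map_smul, Submodule.orthogonalProjectionOnto_mem_subspace_eq_self]
    have : H.orthogonalProjectionOnto x0 = 0 := by
      rw [Submodule.orthogonalProjectionOnto_eq_zero_iff, hH, Submodule.orthogonal_orthogonal]
      exact Submodule.mem_span_singleton_self x0
    rw [this]; simp

/-- countable partition into small pieces -/
lemma exists_partition (S : Set E) (hS : MeasurableSet S) {r : ℝ} (hr : 0 < r) :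
    ∃ A : ℕ → Set E, (∀ n, MeasurableSet (A n)) ∧ Pairwise (Function.onFun Disjoint A) ∧
      (⋃ n, A n) = S ∧ ∀ n, ∀ x ∈ A n, ∀ y ∈ A n, ‖x - y‖ ≤ r := by
  set B : ℕ → Set E := fun n => ball (TopologicalSpace.denseSeq E n) (r/2)
  have hm : ∀ n, MeasurableSet (disjointed B n) :=
    fun n => MeasurableSet.disjointed (fun _ => measurableSet_ball) n
  refine ⟨fun n => S ∩ disjointed B n, fun n => hS.inter (hm n), ?_, ?_, ?_⟩
  · intro i j hij
    exact ((disjoint_disjointed B hij).mono inter_subset_right inter_subset_right)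
  · rw [← inter_iUnion, iUnion_disjointed]
    have : (⋃ n, B n) = univ := by
      apply eq_univ_of_forall
      intro x
      obtain ⟨n, hn⟩ := (TopologicalSpace.denseRange_denseSeq E).exists_dist_lt x (half_pos hr)
      exact mem_iUnion.2 ⟨n, hn⟩
    rw [this, inter_univ]
  · intro n x hx y hy
    have h1 := disjointed_subset B n hx.2
    have h2 := disjointed_subset B n hy.2
    rw [mem_ball] at h1 h2
    rw [← dist_eq_norm]
    have := dist_triangle_right x y (TopologicalSpace.denseSeq E n)
    linarith

end area

section area
variable {E : Type*} [NormedAddCommGroup E] [InnerProductSpace ℝ E]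
variable [FiniteDimensional ℝ E] [MeasurableSpace E] [BorelSpace E]

lemma piece_int {d : ℕ} (hd : Module.finrank ℝ E = d + 1) (T W : E →ₗ[ℝ] E) {M r : ℝ}
    (hM : 1 ≤ M) (hTM : ∀ v, ‖T v‖ ≤ M * ‖v‖) (hWM : ∀ v, ‖W v‖ ≤ M * ‖v‖)
    (hMT : ∀ v, ‖v‖ ≤ M * ‖T v‖) (hMW : ∀ v, ‖v‖ ≤ M * ‖W v‖) (hr : 0 ≤ r)
    (hTW : ∀ v x, ⟪T v, W x⟫ = ⟪v, x⟫)
    {K : NNReal} (hδ : r * M ^ 2 < 1) (hK : 1 ≤ K * (1 - r * M ^ 2))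
    (A : Set E) (hAm : MeasurableSet A) (hA : ∀ x ∈ A, ‖x‖ = 1)
    (hA' : ∀ x ∈ A, ∀ y ∈ A, ‖x - y‖ ≤ r) :
    μH[(d:ℝ)] (T '' A) ≤ (K:ENNReal) ^ (2 * d + 1) *
      ∫⁻ x in A, ENNReal.ofReal (|LinearMap.det T| * ‖W x‖) ∂μH[(d:ℝ)] ∧
    (∫⁻ x in A, ENNReal.ofReal (|LinearMap.det T| * ‖W x‖) ∂μH[(d:ℝ)]) ≤
      (K:ENNReal) ^ (2 * d + 1) * μH[(d:ℝ)] (T '' A) := by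
  rcases A.eq_empty_or_nonempty with rfl | ⟨x0, hx0A⟩
  · simp
  have hx0 := hA x0 hx0A
  have hW0 : W x0 ≠ 0 := by
    intro h
    have := hMW x0
    rw [h, hx0, norm_zero, mul_zero] at this
    linarith
  obtain ⟨p1, p2, -⟩ := piece_est hd T W hM hTM hMT hx0 hr hW0 (fun v => hTW v x0) hδ hK A
    (fun x hx => ⟨hA x hx, hA' x hx x0 hx0A⟩)
  have hK1 : 1 + r * M ^ 2 ≤ K := by
    have : 0 ≤ r * M ^ 2 := by positivity
    by_contra hh
    nlinarith [sq_nonneg (r * M ^ 2)]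
  have key : ∀ x ∈ A, ∀ y ∈ A, ‖W x‖ ≤ K * ‖W y‖ := by
    intro x hx y hy
    have h1 : ‖W x‖ ≤ ‖W y‖ + ‖W (x - y)‖ := by
      have := norm_add_le (W y) (W (x - y))
      rwa [← map_add, add_sub_cancel] at this
    have h2 : ‖W (x - y)‖ ≤ M * r := (hWM _).trans (by gcongr; exact hA' x hx y hy)
    have h3 : 1 ≤ M * ‖W y‖ := by have := hMW y; rwa [hA y hy] at this
    have h4 : M * r * 1 ≤ M * r * (M * ‖W y‖) := by gcongr
    calc ‖W x‖ ≤ (1 + r * M ^ 2) * ‖W y‖ := by linarith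
      _ ≤ _ := by gcongr
  have key' : ∀ x ∈ A, ∀ y ∈ A, ENNReal.ofReal (|LinearMap.det T| * ‖W x‖) ≤
      K * ENNReal.ofReal (|LinearMap.det T| * ‖W y‖) := by
    intro x hx y hy
    rw [← ENNReal.ofReal_coe_nnreal (p := K), ← ENNReal.ofReal_mul (NNReal.coe_nonneg K)]
    apply ENNReal.ofReal_le_ofReal
    calc |LinearMap.det T| * ‖W x‖ ≤ |LinearMap.det T| * (K * ‖W y‖) := by gcongr; exact key x hx y hy
      _ = _ := by ring
  set c := ENNReal.ofReal (|LinearMap.det T| * ‖W x0‖)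
  have hWc : Measurable W := W.continuous_of_finiteDimensional.measurable
  have hmeas : Measurable (fun x => ENNReal.ofReal (|LinearMap.det T| * ‖W x‖)) := by fun_prop
  have i1 : c * μH[(d:ℝ)] A ≤ K * ∫⁻ x in A, ENNReal.ofReal (|LinearMap.det T| * ‖W x‖) ∂μH[(d:ℝ)] := by
    rw [← setLIntegral_const, ← lintegral_const_mul _ hmeas]
    exact setLIntegral_mono' hAm (fun x hx => key' x0 hx0A x hx)
  have i2 : (∫⁻ x in A, ENNReal.ofReal (|LinearMap.det T| * ‖W x‖) ∂μH[(d:ℝ)]) ≤ K * (c * μH[(d:ℝ)] A) := by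
    rw [← mul_assoc, ← setLIntegral_const]
    exact setLIntegral_mono' hAm (fun x hx => key' x hx x0 hx0A)
  have eK : (K:ENNReal) ^ (2 * d + 1) = (K:ENNReal) ^ (d:ℝ) * (K:ENNReal) ^ (d:ℝ) * K := by
    rw [ENNReal.rpow_natCast]; ring
  rw [eK]
  constructor
  · refine p1.trans ?_
    rw [mul_assoc, mul_assoc]
    gcongr
  · refine i2.trans ?_
    refine (mul_le_mul_right p2 _).trans (le_of_eq ?_)
    ring

theorem area_formula {d : ℕ} (hd : Module.finrank ℝ E = d + 1) (T W : E →ₗ[ℝ] E) {M : ℝ}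
    (hM : 1 ≤ M) (hTM : ∀ v, ‖T v‖ ≤ M * ‖v‖) (hWM : ∀ v, ‖W v‖ ≤ M * ‖v‖)
    (h1 : ∀ v, W (T v) = v) (h2 : ∀ v, T (W v) = v)
    (hTW : ∀ v x, ⟪T v, W x⟫ = ⟪v, x⟫) :
    μH[(d:ℝ)] (T '' sphere (0:E) 1) =
      ∫⁻ x in sphere (0:E) 1, ENNReal.ofReal (|LinearMap.det T| * ‖W x‖) ∂μH[(d:ℝ)] := by
  have hMT : ∀ v, ‖v‖ ≤ M * ‖T v‖ := fun v => by
    have := hWM (T v); rwa [h1] at this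
  have hMW : ∀ v, ‖v‖ ≤ M * ‖W v‖ := fun v => by
    have := hTM (W v); rwa [h2] at this
  have himg : ∀ A : Set E, T '' A = W ⁻¹' A := fun A =>
    congrFun (image_eq_preimage_of_inverse h1 h2) A
  have hWc : Measurable W := W.continuous_of_finiteDimensional.measurable
  set I := ∫⁻ x in sphere (0:E) 1, ENNReal.ofReal (|LinearMap.det T| * ‖W x‖) ∂μH[(d:ℝ)] with hI
  have main : ∀ r > 0, r * M ^ 2 < 1 → 
      μH[(d:ℝ)] (T '' sphere (0:E) 1) ≤ (((1 - r * M ^ 2)⁻¹).toNNReal : ENNReal) ^ (2 * d + 1) * I ∧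
      I ≤ (((1 - r * M ^ 2)⁻¹).toNNReal : ENNReal) ^ (2 * d + 1) * μH[(d:ℝ)] (T '' sphere (0:E) 1) := by
    intro r hr hδ
    obtain ⟨A, hAm, hdis, hU, hsm⟩ := exists_partition (sphere (0:E) 1) isClosed_sphere.measurableSet hr
    set K := ((1 - r * M ^ 2)⁻¹).toNNReal
    have hpos : 0 < 1 - r * M ^ 2 := by linarith
    have hK : 1 ≤ K * (1 - r * M ^ 2) := by
      rw [Real.coe_toNNReal _ (inv_pos.2 hpos).le, inv_mul_cancel₀ hpos.ne']
    have hp := fun n => piece_int hd T W hM hTM hWM hMT hMW hr.le hTW hδ hK (A n) (hAm n)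
      (fun x hx => by
        have : x ∈ sphere (0:E) 1 := hU ▸ mem_iUnion.2 ⟨n, hx⟩
        simpa using this) (hsm n)
    have eI : I = ∑' n, ∫⁻ x in A n, ENNReal.ofReal (|LinearMap.det T| * ‖W x‖) ∂μH[(d:ℝ)] := by
      rw [hI, ← hU, lintegral_iUnion hAm hdis]
    have eT : μH[(d:ℝ)] (T '' sphere (0:E) 1) = ∑' n, μH[(d:ℝ)] (T '' A n) := by
      simp only [himg]
      rw [← hU, preimage_iUnion, measure_iUnion]
      · intro i j hij
        exact (hdis hij).preimage _
      · exact fun n => hWc (hAm n)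
    rw [eI, eT, ← ENNReal.tsum_mul_left, ← ENNReal.tsum_mul_left]
    exact ⟨ENNReal.tsum_le_tsum fun n => (hp n).1, ENNReal.tsum_le_tsum fun n => (hp n).2⟩
  have hev : ∀ᶠ r in 𝓝[>] (0:ℝ), 0 < r ∧ r * M ^ 2 < 1 := by
    have : Tendsto (fun r : ℝ => r * M ^ 2) (𝓝[>] 0) (𝓝 (0 * M ^ 2)) :=
      ((continuous_id.mul continuous_const).tendsto 0).mono_left nhdsWithin_le_nhds
    rw [zero_mul] at this
    filter_upwards [self_mem_nhdsWithin, this.eventually_lt_const one_pos] with r h h' using ⟨h, h'⟩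
  have hlim : Tendsto (fun r : ℝ => (((1 - r * M ^ 2)⁻¹).toNNReal : ENNReal) ^ (2 * d + 1)) (𝓝[>] 0) (𝓝 1) := by
    have a1 : Tendsto (fun r : ℝ => (1 - r * M ^ 2)⁻¹) (𝓝[>] 0) (𝓝 1) := by
      have : ContinuousAt (fun r : ℝ => (1 - r * M ^ 2)⁻¹) 0 := by
        apply ContinuousAt.inv₀ (by fun_prop); simp
      have h3 := this.tendsto.mono_left (nhdsWithin_le_nhds (s := Ioi 0))
      simpa using h3
    have a2 := ENNReal.tendsto_ofReal a1
    have a3 := ((ENNReal.continuous_pow (2 * d + 1)).tendsto _).comp a2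
    simpa [ENNReal.ofReal, Function.comp_def] using a3
  have lim' : ∀ b : ENNReal, Tendsto (fun r : ℝ => (((1 - r * M ^ 2)⁻¹).toNNReal : ENNReal) ^ (2 * d + 1) * b) (𝓝[>] 0) (𝓝 b) := by
    intro b
    have := ENNReal.Tendsto.mul_const (b := b) hlim (Or.inl one_ne_zero)
    rwa [one_mul] at this
  apply le_antisymm
  · exact ge_of_tendsto (lim' I) (hev.mono fun r h => (main r h.1 h.2).1)
  · exact ge_of_tendsto (lim' _) (hev.mono fun r h => (main r h.1 h.2).2)

end area

/-- integral over the unit sphere -/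
noncomputable def sint {n : ℕ} (f : euc (n+2) → ℝ) : ℝ :=
  ∫ x in sphere (0 : euc (n+2)) 1, f x ∂μH[((n+1 : ℕ):ℝ)]

lemma finrank_euc (n : ℕ) : Module.finrank ℝ (euc (n+2)) = (n+1) + 1 := by simp

lemma sint_integrable {n : ℕ} {f : euc (n+2) → ℝ} (hf : Continuous f) :
    IntegrableOn f (sphere 0 1) μH[((n+1 : ℕ):ℝ)] := by
  obtain ⟨C, hC⟩ := (isCompact_sphere (0 : euc (n+2)) 1).exists_bound_of_continuousOn hf.continuousOn
  exact Measure.integrableOn_of_bounded (M := C) (sphere_finite (finrank_euc n)).ne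
    hf.aestronglyMeasurable
    ((ae_restrict_iff' isClosed_sphere.measurableSet).2 (ae_of_all _ fun x hx => hC x hx))

lemma sint_invariant {n : ℕ} (U : euc (n+2) ≃ₗᵢ[ℝ] euc (n+2)) (f : euc (n+2) → ℝ) :
    sint (fun x => f (U x)) = sint f := by
  have h := (U.toIsometryEquiv.measurePreserving_hausdorffMeasure ((n+1 : ℕ):ℝ))
  have h2 := h.setIntegral_preimage_emb U.toHomeomorph.measurableEmbedding f (sphere 0 1)
  have e : U.toIsometryEquiv ⁻¹' (sphere (0 : euc (n+2)) 1) = sphere 0 1 := by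
    ext x; simp
  rw [e] at h2
  exact h2

/-- rotation in the first two coordinates -/
noncomputable def rotL (n : ℕ) : euc (n+2) →ₗ[ℝ] euc (n+2) where
  toFun x := WithLp.toLp 2 (Fin.cons ((√2)⁻¹ * (x 0 + x 1)) (Fin.cons ((√2)⁻¹ * (x 0 - x 1))
    (fun i => x i.succ.succ)))
  map_add' x y := by
    ext i
    refine Fin.cases ?_ (fun i => Fin.cases ?_ (fun i => ?_) i) i <;> simp <;> ring
  map_smul' x y := by
    ext i
    refine Fin.cases ?_ (fun i => Fin.cases ?_ (fun i => ?_) i) i <;> simp <;> ring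

lemma rotL_zero (n : ℕ) (x : euc (n+2)) : rotL n x 0 = (√2)⁻¹ * (x 0 + x 1) := rfl
lemma rotL_one (n : ℕ) (x : euc (n+2)) : rotL n x 1 = (√2)⁻¹ * (x 0 - x 1) := rfl

lemma sqrt2_inv : ((√2)⁻¹ : ℝ) ^ 2 = 1 / 2 := by
  rw [inv_pow, Real.sq_sqrt (by norm_num)]; norm_num

lemma rotL_norm (n : ℕ) (x : euc (n+2)) : ‖rotL n x‖ = ‖x‖ := by
  rw [← sq_eq_sq₀ (norm_nonneg _) (norm_nonneg _), norm_sq_sum, norm_sq_sum, Fin.sum_univ_succ,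
    Fin.sum_univ_succ, Fin.sum_univ_succ (n := n+1), Fin.sum_univ_succ (n := n)]
  have h0 := rotL_zero n x
  have h1 := rotL_one n x
  have h2 : ∀ i : Fin n, rotL n x i.succ.succ = x i.succ.succ := fun i => rfl
  simp only [Fin.succ_zero_eq_one, h0, h1, h2, mul_pow, sqrt2_inv]
  ring

noncomputable def rotE (n : ℕ) : euc (n+2) ≃ₗᵢ[ℝ] euc (n+2) :=
  LinearIsometry.toLinearIsometryEquiv ⟨rotL n, rotL_norm n⟩ rfl

lemma rotE_apply (n : ℕ) (x : euc (n+2)) : rotE n x = rotL n x := rfl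

lemma tau_eq {n : ℕ} (x : euc (n+2)) : tau x = x 0 ^ 2 - x 1 ^ 2 := by
  rw [tau, Qf, Fin.sum_univ_succ, Fin.sum_univ_succ]
  simp [eps]; ring

lemma sint_perm {n : ℕ} (σ : Equiv.Perm (Fin (n+2))) (f : euc (n+2) → ℝ) :
    sint (fun x => f (WithLp.toLp 2 (fun i => x (σ i)))) = sint f := by
  have := sint_invariant (LinearIsometryEquiv.piLpCongrLeft 2 ℝ ℝ σ.symm) f
  rw [← this]
  rfl

lemma sint_add {n : ℕ} {f g : euc (n+2) → ℝ} (hf : Continuous f) (hg : Continuous g) :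
    sint (fun x => f x + g x) = sint f + sint g :=
  integral_add (sint_integrable hf) (sint_integrable hg)

lemma sint_sub {n : ℕ} {f g : euc (n+2) → ℝ} (hf : Continuous f) (hg : Continuous g) :
    sint (fun x => f x - g x) = sint f - sint g :=
  integral_sub (sint_integrable hf) (sint_integrable hg)

lemma sint_mul {n : ℕ} (c : ℝ) (f : euc (n+2) → ℝ) :
    sint (fun x => c * f x) = c * sint f := integral_const_mul c f

lemma sint_sum {n : ℕ} {ι : Type*} (s : Finset ι) (f : ι → euc (n+2) → ℝ)
    (hf : ∀ i, Continuous (f i)) :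
    sint (fun x => ∑ i ∈ s, f i x) = ∑ i ∈ s, sint (f i) :=
  integral_finsetSum s (fun i _ => sint_integrable (hf i))

lemma sint_congr {n : ℕ} {f g : euc (n+2) → ℝ} (h : ∀ x, ‖x‖ = 1 → f x = g x) :
    sint f = sint g :=
  setIntegral_congr_fun isClosed_sphere.measurableSet (fun x hx => h x (by simpa using hx))

lemma cont_coord {n : ℕ} (i : Fin (n+2)) : Continuous (fun x : euc (n+2) => x i) := by fun_prop

lemma sint_tau {n : ℕ} : sint (tau : euc (n+2) → ℝ) = 0 := by
  have h := sint_perm (Equiv.swap (0 : Fin (n+2)) 1) tau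
  have h2 : sint (fun x : euc (n+2) => tau (WithLp.toLp 2 (fun i => x (Equiv.swap 0 1 i)))) =
      sint (fun x : euc (n+2) => (-1) * tau x) := by
    congr 1; ext x
    rw [tau_eq, tau_eq]; simp
  rw [h2, sint_mul] at h
  linarith

lemma exists_perm {n : ℕ} {i j : Fin (n+2)} (hij : i ≠ j) :
    ∃ σ : Equiv.Perm (Fin (n+2)), σ 0 = i ∧ σ 1 = j := by
  have hk : Equiv.swap 0 i 1 ≠ i := by
    intro h
    have : Equiv.swap 0 i 1 = Equiv.swap 0 i 0 := by rw [h, Equiv.swap_apply_left]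
    exact absurd ((Equiv.swap 0 i).injective this) (by simp)
  refine ⟨Equiv.swap (Equiv.swap 0 i 1) j * Equiv.swap 0 i, ?_, ?_⟩
  · rw [Equiv.Perm.mul_apply, Equiv.swap_apply_left, Equiv.swap_apply_of_ne_of_ne hk.symm hij]
  · rw [Equiv.Perm.mul_apply, Equiv.swap_apply_left]

lemma sint_tau_sq {n : ℕ} : sint (fun x : euc (n+2) => tau x ^ 2) =
    4 * sint (fun _ : euc (n+2) => 1) / ((n + 2) * (n + 4)) := by
  set m4 := sint (fun x : euc (n+2) => x 0 ^ 4) with hm4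
  set m2 := sint (fun x : euc (n+2) => x 0 ^ 2 * x 1 ^ 2) with hm2
  have e4 : ∀ i : Fin (n+2), sint (fun x : euc (n+2) => x i ^ 4) = m4 := by
    intro i
    have := sint_perm (Equiv.swap 0 i) (fun x : euc (n+2) => x 0 ^ 4)
    simpa using this
  have e2 : ∀ i j : Fin (n+2), i ≠ j → sint (fun x : euc (n+2) => x i ^ 2 * x j ^ 2) = m2 := by
    intro i j hij
    obtain ⟨σ, h0, h1⟩ := exists_perm hij
    have := sint_perm σ (fun x : euc (n+2) => x 0 ^ 2 * x 1 ^ 2)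
    simpa [h0, h1] using this
  have t1 : sint (fun x : euc (n+2) => tau x ^ 2) = 4 * m2 := by
    rw [← sint_invariant (rotE n), hm2, ← sint_mul]
    congr 1; ext x
    rw [rotE_apply, tau_eq, rotL_zero, rotL_one, mul_pow, mul_pow, sqrt2_inv]; ring
  have t2 : sint (fun x : euc (n+2) => tau x ^ 2) = 2 * m4 - 2 * m2 := by
    have : (fun x : euc (n+2) => tau x ^ 2) = fun x : euc (n+2) =>
        (x 0 ^ 4 + x 1 ^ 4) - 2 * (x 0 ^ 2 * x 1 ^ 2) := by
      ext x; rw [tau_eq]; ring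
    rw [this, sint_sub (by fun_prop) (by fun_prop), sint_add (by fun_prop) (by fun_prop), sint_mul,
      e4, e4]; ring
  have t3 : sint (fun _ : euc (n+2) => 1) = ∑ i : Fin (n+2), ∑ j : Fin (n+2),
      sint (fun x : euc (n+2) => x i ^ 2 * x j ^ 2) := by
    have : sint (fun _ : euc (n+2) => (1:ℝ)) =
        sint (fun x : euc (n+2) => ∑ i : Fin (n+2), ∑ j : Fin (n+2), x i ^ 2 * x j ^ 2) := by
      apply sint_congr
      intro x hx
      have h := norm_sq_sum x
      rw [← Finset.sum_mul_sum, ← h, hx]; norm_num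
    rw [this, sint_sum _ _ (fun i => by fun_prop)]
    refine Finset.sum_congr rfl fun i _ => ?_
    rw [sint_sum _ _ (fun i => by fun_prop)]
  have t4 : ∀ i : Fin (n+2), ∑ j : Fin (n+2), sint (fun x : euc (n+2) => x i ^ 2 * x j ^ 2) =
      m4 + (n+1) * m2 := by
    intro i
    rw [← Finset.add_sum_erase _ _ (Finset.mem_univ i),
      Finset.sum_congr rfl (fun j hj => e2 i j (Finset.ne_of_mem_erase hj).symm)]
    congr 1
    · rw [← e4 i]; congr 1; ext x; ring
    · simp
  rw [t3, Finset.sum_congr rfl (fun i _ => t4 i), t1]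
  have h3 : m4 = 3 * m2 := by linarith
  rw [h3]
  simp
  field_simp
  ring

/-- diagonal map -/
noncomputable def dg {N : ℕ} (c : Fin N → ℝ) : euc N →ₗ[ℝ] euc N where
  toFun x := WithLp.toLp 2 (fun i => c i * x i)
  map_add' x y := by ext i; simp; ring
  map_smul' a x := by ext i; simp; ring

lemma dg_apply {N : ℕ} (c : Fin N → ℝ) (x : euc N) (i : Fin N) : dg c x i = c i * x i := rfl

lemma dg_det {N : ℕ} (c : Fin N → ℝ) : LinearMap.det (dg c) = ∏ i, c i := by
  rw [← LinearMap.det_toMatrix (EuclideanSpace.basisFun (Fin N) ℝ).toBasis]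
  rw [show LinearMap.toMatrix (EuclideanSpace.basisFun (Fin N) ℝ).toBasis
    (EuclideanSpace.basisFun (Fin N) ℝ).toBasis (dg c) = Matrix.diagonal c from ?_,
    Matrix.det_diagonal]
  ext i j
  rw [LinearMap.toMatrix_apply]
  by_cases h : i = j
  · subst h; simp [dg_apply]
  · simp [dg_apply, h, Matrix.diagonal]

lemma dg_norm_sq {N : ℕ} (c : Fin N → ℝ) (x : euc N) : ‖dg c x‖ ^ 2 = ∑ i, c i ^ 2 * x i ^ 2 := by
  rw [norm_sq_sum]; simp only [dg_apply, mul_pow]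

lemma dg_norm_le {N : ℕ} (c : Fin N → ℝ) {M : ℝ} (hM : 0 ≤ M) (hc : ∀ i, c i ^ 2 ≤ M ^ 2) (x : euc N) :
    ‖dg c x‖ ≤ M * ‖x‖ := by
  rw [← sq_le_sq₀ (norm_nonneg _) (by positivity), dg_norm_sq, mul_pow, norm_sq_sum, Finset.mul_sum]
  exact Finset.sum_le_sum fun i _ => mul_le_mul_of_nonneg_right (hc i) (sq_nonneg _)

noncomputable def cf (N : ℕ) (t : ℝ) (i : Fin N) : ℝ := √(1 + t * eps i)

lemma one_add_pos {N : ℕ} {t : ℝ} (ht : |t| ≤ 1/2) (i : Fin N) :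
    1/2 ≤ 1 + t * eps i ∧ 1 + t * eps i ≤ 3/2 := by
  have h1 : |t * eps i| ≤ 1/2 * 1 := by
    rw [abs_mul]; gcongr; exact eps_abs i
  have := abs_le.1 h1
  constructor <;> linarith [this.1, this.2]

lemma cf_sq {N : ℕ} {t : ℝ} (ht : |t| ≤ 1/2) (i : Fin N) : cf N t i ^ 2 = 1 + t * eps i := by
  rw [cf, Real.sq_sqrt]; linarith [(one_add_pos ht i).1]

lemma cf_pos {N : ℕ} {t : ℝ} (ht : |t| ≤ 1/2) (i : Fin N) : 0 < cf N t i :=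
  Real.sqrt_pos.2 (by linarith [(one_add_pos ht i).1])

noncomputable def Wm (N : ℕ) (t : ℝ) : euc N →ₗ[ℝ] euc N := dg (cf N t)
noncomputable def Tm (N : ℕ) (t : ℝ) : euc N →ₗ[ℝ] euc N := dg (fun i => (cf N t i)⁻¹)

lemma WT {N : ℕ} {t : ℝ} (ht : |t| ≤ 1/2) (x : euc N) : Wm N t (Tm N t x) = x := by
  ext i
  rw [Wm, Tm, dg_apply, dg_apply, ← mul_assoc, mul_inv_cancel₀ (cf_pos ht i).ne', one_mul]

lemma TW {N : ℕ} {t : ℝ} (ht : |t| ≤ 1/2) (x : euc N) : Tm N t (Wm N t x) = x := by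
  ext i
  rw [Wm, Tm, dg_apply, dg_apply, ← mul_assoc, inv_mul_cancel₀ (cf_pos ht i).ne', one_mul]

lemma inner_TW {N : ℕ} {t : ℝ} (ht : |t| ≤ 1/2) (v x : euc N) : ⟪Tm N t v, Wm N t x⟫ = ⟪v, x⟫ := by
  rw [PiLp.inner_apply, PiLp.inner_apply]
  refine Finset.sum_congr rfl fun i _ => ?_
  rw [Wm, Tm, dg_apply, dg_apply]
  have := (cf_pos ht i).ne'
  simp only [RCLike.inner_apply, conj_trivial]
  field_simp

lemma Wm_norm_sq {N : ℕ} {t : ℝ} (ht : |t| ≤ 1/2) (x : euc N) :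
    ‖Wm N t x‖ ^ 2 = ‖x‖ ^ 2 + t * tau x := by
  rw [Wm, dg_norm_sq, norm_sq_sum, tau, Qf, Finset.mul_sum, ← Finset.sum_add_distrib]
  refine Finset.sum_congr rfl fun i _ => ?_
  rw [cf_sq ht]; ring

lemma Tm_image {N : ℕ} {t : ℝ} (ht : |t| ≤ 1/2) (A : Set (euc N)) : Tm N t '' A = Wm N t ⁻¹' A :=
  congrFun (image_eq_preimage_of_inverse (WT ht) (TW ht)) A

lemma Eset_eq_image {N : ℕ} {t : ℝ} (ht : |t| ≤ 1/2) : Tm N t '' ball 0 1 = Eset N t := by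
  rw [Tm_image ht]
  ext x
  rw [mem_preimage, mem_ball_zero_iff, Eset, mem_ofPred_eq, ← Wm_norm_sq ht, sq_lt_one_iff₀ (norm_nonneg _)]

noncomputable def Wh (N : ℕ) (t : ℝ) (ht : |t| ≤ 1/2) : euc N ≃ₜ euc N where
  toFun := Wm N t
  invFun := Tm N t
  left_inv := TW ht
  right_inv := WT ht
  continuous_toFun := (Wm N t).continuous_of_finiteDimensional
  continuous_invFun := (Tm N t).continuous_of_finiteDimensional

lemma Eset_frontier_eq {N : ℕ} {t : ℝ} (ht : |t| ≤ 1/2) :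
    frontier (Eset N t) = Tm N t '' sphere 0 1 := by
  rw [← Eset_eq_image ht, Tm_image ht, Tm_image ht]
  have := (Wh N t ht).preimage_frontier (ball 0 1)
  rw [frontier_ball _ one_ne_zero] at this
  exact this.symm

/-- Jacobian -/
noncomputable def Dt (t : ℝ) : ℝ := (1 - t ^ 2) ^ (-(1/2) : ℝ)

lemma Tm_det {n : ℕ} {t : ℝ} (ht : |t| ≤ 1/2) : |LinearMap.det (Tm (n+2) t)| = Dt t := by
  have h1 := abs_le.1 ht
  have e : ∏ i : Fin (n+2), cf (n+2) t i = √(1 - t^2) := by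
    rw [Fin.prod_univ_succ, Fin.prod_univ_succ]
    simp only [cf, eps]
    simp only [Fin.val_zero, if_true, Fin.val_succ, zero_add, one_ne_zero, if_false, Nat.succ_ne_zero,
      Nat.add_eq_right]
    simp
    rw [← Real.sqrt_mul (by linarith [h1.1])]
    congr 1; ring
  rw [Tm, dg_det, Finset.prod_inv_distrib, e, abs_of_nonneg (by positivity), Dt, Real.rpow_neg,
    Real.sqrt_eq_rpow]
  nlinarith

lemma vol_Eset {n : ℕ} {t : ℝ} (ht : |t| ≤ 1/2) :
    (volume (Eset (n+2) t)).toReal = Dt t * ballVol (n+2) := by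
  rw [← Eset_eq_image ht, Measure.addHaar_image_linearMap, Tm_det ht, ENNReal.toReal_mul,
    ENNReal.toReal_ofReal, ballVol]
  rw [← Tm_det (n := n) ht]; positivity

lemma perim_Eset {n : ℕ} {t : ℝ} (ht : |t| ≤ 1/2) :
    perim (n+2) (Eset (n+2) t) = Dt t * sint (fun x : euc (n+2) => √(1 + t * tau x)) := by
  have hd : (((n+2 : ℕ) : ℝ) - 1) = ((n+1 : ℕ) : ℝ) := by push_cast; ring
  rw [perim, hd, Eset_frontier_eq ht, area_formula (finrank_euc n) (Tm (n+2) t) (Wm (n+2) t) (M := 2)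
    (by norm_num) ?_ ?_ (WT ht) (TW ht) (inner_TW ht), sint, ← integral_const_mul,
    integral_eq_lintegral_of_nonneg_ae, Tm_det ht]
  · congr 1
    apply setLIntegral_congr_fun isClosed_sphere.measurableSet
    intro x hx
    have hx1 : ‖x‖ = 1 := by simpa using hx
    show ENNReal.ofReal _ = ENNReal.ofReal _
    rw [← Real.sqrt_sq (norm_nonneg (Wm (n+2) t x)), Wm_norm_sq ht, hx1, one_pow]
  · refine ae_of_all _ fun x => ?_
    have : 0 ≤ Dt t := by rw [← Tm_det (n := n) ht]; positivity
    show 0 ≤ Dt t * _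
    positivity
  · have := tau_continuous (N := n+2)
    exact Continuous.aestronglyMeasurable (by fun_prop)
  · apply dg_norm_le _ (by norm_num)
    intro i
    rw [inv_pow, cf_sq ht]
    have := (one_add_pos ht i).1
    rw [inv_le_comm₀ (by linarith) (by norm_num)]; norm_num; linarith
  · apply dg_norm_le _ (by norm_num)
    intro i
    rw [cf_sq ht]
    have := (one_add_pos ht i).2
    linarith

/-- perimeter of the unit sphere -/
noncomputable def P1 (n : ℕ) : ℝ := sint (fun _ : euc (n+2) => 1)

lemma P1_eq (n : ℕ) : P1 n = (μH[((n+1 : ℕ):ℝ)] (sphere (0 : euc (n+2)) 1)).toReal := by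
  simp [P1, sint, Measure.real]

lemma P1_pos (n : ℕ) : 0 < P1 n := by
  rw [P1_eq]
  exact ENNReal.toReal_pos (sphere_pos (finrank_euc n)).ne' (sphere_finite (finrank_euc n)).ne

open scoped Pointwise in
lemma perim_ball {n : ℕ} {R : ℝ} (hR : 0 < R) :
    perim (n+2) (ball 0 R) = R ^ (n+1) * P1 n := by
  have hd : (((n+2 : ℕ) : ℝ) - 1) = ((n+1 : ℕ) : ℝ) := by push_cast; ring
  have hs : sphere (0 : euc (n+2)) R = R • sphere (0 : euc (n+2)) 1 := by
    rw [smul_sphere' hR.ne']; simp [abs_of_pos hR]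
  rw [perim, hd, frontier_ball _ hR.ne', hs, Measure.hausdorffMeasure_smul₀ (by positivity) hR.ne',
    P1_eq, ENNReal.smul_def, smul_eq_mul, ENNReal.toReal_mul]
  congr 1
  simp [abs_of_pos hR]
  exact_mod_cast Real.rpow_natCast R (n+1)

lemma sqrt_est {y : ℝ} (hy : |y| ≤ 1/2) : |√(1 + y) - (1 + y/2 - y^2/8)| ≤ |y|^3 := by
  obtain ⟨h1, h2⟩ := abs_le.1 hy
  set s := √(1 + y) with hs
  have hs0 : 0 ≤ s := Real.sqrt_nonneg _
  have hs2 : s ^ 2 = 1 + y := Real.sq_sqrt (by linarith)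
  set p := 1 + y/2 - y^2/8 with hp
  have hp0 : 1/2 ≤ p := by rw [hp]; nlinarith
  have e : (s - p) * (s + p) = y^3 * (1/8 - y/64) := by
    have : (s - p) * (s + p) = s^2 - p^2 := by ring
    rw [this, hs2, hp]; ring
  have e2 : |s - p| * (s + p) = |y|^3 * |1/8 - y/64| := by
    rw [← abs_pow, ← abs_mul, ← e, abs_mul, abs_of_nonneg (by linarith : 0 ≤ s + p)]
  have h3 : |1/8 - y/64| ≤ 1/2 := by rw [abs_le]; constructor <;> linarith
  have h4 : |s - p| * (1/2) ≤ |s - p| * (s + p) := by gcongr; linarith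
  have h5 : |y|^3 * |1/8 - y/64| ≤ |y|^3 * (1/2) := by gcongr
  linarith

lemma sint_sqrt_est {n : ℕ} {t : ℝ} (ht : |t| ≤ 1/2) :
    |sint (fun x : euc (n+2) => √(1 + t * tau x)) - P1 n * (1 - t^2 / (2 * (n+2) * (n+4)))| ≤
      |t|^3 * P1 n := by
  have hτ := tau_continuous (N := n+2)
  have e1 : sint (fun x : euc (n+2) => (1 + (t/2) * tau x) - (t^2/8) * (tau x)^2) =
      P1 n * (1 - t^2 / (2 * (n+2) * (n+4))) := by
    rw [sint_sub (by fun_prop) (by fun_prop), sint_add (by fun_prop) (by fun_prop), sint_mul, sint_mul,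
      sint_tau, sint_tau_sq, ← P1]
    field_simp
    ring
  rw [← e1, ← sint_sub (by fun_prop) (by fun_prop), P1, ← sint_mul]
  unfold sint
  rw [← Real.norm_eq_abs]
  refine norm_integral_le_of_norm_le (sint_integrable (by fun_prop)) ?_
  refine (ae_restrict_iff' isClosed_sphere.measurableSet).2 (ae_of_all _ fun x hx => ?_)
  have hx1 : ‖x‖ = 1 := by simpa using hx
  have h1 := abs_tau_le x
  rw [hx1, one_pow] at h1
  have h2 : |t * tau x| ≤ |t| := by
    rw [abs_mul]; exact mul_le_of_le_one_right (abs_nonneg _) h1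
  have h3 := sqrt_est (h2.trans ht)
  rw [Real.norm_eq_abs, mul_one]
  have h4 : √(1 + t * tau x) - (1 + t / 2 * tau x - t ^ 2 / 8 * tau x ^ 2) =
    √(1 + t * tau x) - (1 + t * tau x / 2 - (t * tau x) ^ 2 / 8) := by ring
  rw [h4]
  refine h3.trans ?_
  gcongr

lemma ev_half : ∀ᶠ t in 𝓝[>] (0:ℝ), 0 < t ∧ |t| ≤ 1/2 := by
  filter_upwards [Ioo_mem_nhdsGT (show (0:ℝ) < 1/2 by norm_num)] with t ht
  exact ⟨ht.1, by rw [abs_of_pos ht.1]; exact ht.2.le⟩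

lemma S_lim (n : ℕ) : Tendsto (fun t : ℝ => (sint (fun x : euc (n+2) => √(1 + t * tau x)) / P1 n - 1) / t^2)
    (𝓝[>] 0) (𝓝 (-(1 / (2 * ((n:ℝ)+2) * (n+4))))) := by
  rw [tendsto_iff_norm_sub_tendsto_zero]
  have hid : Tendsto (fun t : ℝ => t) (𝓝[>] 0) (𝓝 0) := nhdsWithin_le_nhds
  refine squeeze_zero' (Eventually.of_forall fun _ => norm_nonneg _) ?_ hid
  filter_upwards [ev_half] with t ⟨h0, ht⟩
  have h := sint_sqrt_est (n := n) ht
  have hP := P1_pos n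
  set S := sint (fun x : euc (n+2) => √(1 + t * tau x))
  have e : (S / P1 n - 1) / t^2 - -(1 / (2 * (n+2) * (n+4))) =
      (S - P1 n * (1 - t^2 / (2 * (n+2) * (n+4)))) / (P1 n * t^2) := by
    have := hP.ne'
    have := h0.ne'
    field_simp
    ring
  rw [e, Real.norm_eq_abs, abs_div, abs_of_pos (by positivity : 0 < P1 n * t^2), div_le_iff₀ (by positivity)]
  rw [abs_of_pos h0] at h
  linarith

lemma lim_mul {a b : ℝ → ℝ} {α β : ℝ} (ha : Tendsto (fun t => (a t - 1)/t^2) (𝓝[>] 0) (𝓝 α))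
    (hb : Tendsto (fun t => (b t - 1)/t^2) (𝓝[>] 0) (𝓝 β)) :
    Tendsto (fun t => (a t * b t - 1)/t^2) (𝓝[>] 0) (𝓝 (α + β)) := by
  have hid : Tendsto (fun t : ℝ => t^2) (𝓝[>] 0) (𝓝 (0^2)) :=
    ((continuous_pow 2).tendsto 0).mono_left nhdsWithin_le_nhds
  have h1 : Tendsto (fun t => 1 + t^2 * ((b t - 1)/t^2)) (𝓝[>] 0) (𝓝 (1 + 0^2 * β)) :=
    (hid.mul hb).const_add 1
  have h2 := (ha.mul h1).add hb
  have e : α * (1 + 0^2 * β) + β = α + β := by ring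
  rw [e] at h2
  refine h2.congr' ?_
  filter_upwards [self_mem_nhdsWithin] with t ht
  have : t ≠ 0 := (mem_Ioi.1 ht).ne'
  field_simp
  ring

/-- the radius of the symmetrized ball -/
noncomputable def Rt (n : ℕ) (t : ℝ) : ℝ := Dt t ^ ((1:ℝ) / ((n+2 : ℕ):ℝ))

lemma Dt_pos {t : ℝ} (ht : |t| ≤ 1/2) : 0 < Dt t := by
  have h1 := abs_le.1 ht
  exact Real.rpow_pos_of_pos (by nlinarith) _

lemma Rt_pos {n : ℕ} {t : ℝ} (ht : |t| ≤ 1/2) : 0 < Rt n t := Real.rpow_pos_of_pos (Dt_pos ht) _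

lemma Rt_pow {n : ℕ} {t : ℝ} (ht : |t| ≤ 1/2) : Rt n t ^ (n+2) = Dt t := by
  rw [Rt, ← Real.rpow_natCast, ← Real.rpow_mul (Dt_pos ht).le, one_div, inv_mul_cancel₀, Real.rpow_one]
  positivity

lemma Rt_lim (n : ℕ) : Tendsto (fun t => (Rt n t - 1)/t^2) (𝓝[>] 0) (𝓝 (1 / (2 * ((n:ℝ)+2)))) := by
  set a : ℝ := -(1/2) * (1 / ((n+2 : ℕ):ℝ)) with ha
  have hd : HasDerivAt (fun s : ℝ => (1 - s) ^ a) (1 / (2 * (n+2))) 0 := by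
    have h1 : HasDerivAt (fun s : ℝ => 1 - s) (-1) 0 := by
      simpa using (hasDerivAt_id (0:ℝ)).const_sub 1
    have h2 := h1.rpow_const (p := a) (Or.inl (by norm_num))
    convert h2 using 1
    rw [ha]
    simp
    ring
  have hsl := hasDerivAt_iff_tendsto_slope_zero.1 hd
  have hid : Tendsto (fun t : ℝ => t^2) (𝓝[>] 0) (𝓝[≠] 0) := by
    apply tendsto_nhdsWithin_of_tendsto_nhds_of_eventually_within
    · have : Tendsto (fun t : ℝ => t^2) (𝓝[>] 0) (𝓝 (0^2)) :=
        ((continuous_pow 2).tendsto 0).mono_left nhdsWithin_le_nhds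
      simpa using this
    · filter_upwards [self_mem_nhdsWithin] with t ht
      exact pow_ne_zero 2 (mem_Ioi.1 ht).ne'
  refine (hsl.comp hid).congr' ?_
  filter_upwards [ev_half] with t ⟨h0, ht⟩
  have hpos : 0 ≤ 1 - t^2 := by have := abs_le.1 ht; nlinarith
  rw [Rt, Dt, ← Real.rpow_mul hpos]
  simp only [Function.comp, smul_eq_mul, zero_add, sub_zero, Real.one_rpow]
  rw [← ha]
  field_simp

lemma ballVol_pos (N : ℕ) : 0 < ballVol N :=
  ENNReal.toReal_pos (measure_ball_pos _ _ one_pos).ne' measure_ball_lt_top.ne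

lemma sharp_Eset {n : ℕ} {t : ℝ} (ht : |t| ≤ 1/2) : sharpRadius (n+2) (Eset (n+2) t) = Rt n t := by
  rw [sharpRadius, vol_Eset ht, mul_div_assoc, div_self (ballVol_pos _).ne', mul_one, Rt]

lemma perDeficit_eq {n : ℕ} {t : ℝ} (ht : |t| ≤ 1/2) : perDeficit (n+2) (Eset (n+2) t) =
    Rt n t * (sint (fun x : euc (n+2) => √(1 + t * tau x)) / P1 n) - 1 := by
  have hR := Rt_pos (n := n) ht
  have hP := (P1_pos n).ne'
  rw [perDeficit, sharp_Eset ht, perim_ball hR, perim_Eset ht, ← Rt_pow (n := n) ht, pow_succ _ (n+1)]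
  have := (pow_pos hR (n+1)).ne'
  field_simp

lemma per_lim (n : ℕ) : Tendsto (fun t => perDeficit (n+2) (Eset (n+2) t) / t^2) (𝓝[>] 0)
    (𝓝 ((n+3) / (2 * (n+2) * (n+4)))) := by
  have h := lim_mul (Rt_lim n) (S_lim n)
  have e : (1 / (2 * ((n:ℝ)+2)) + -(1 / (2 * (n+2) * (n+4)))) = (n+3) / (2 * (n+2) * (n+4)) := by
    field_simp; ring
  rw [e] at h
  refine h.congr' ?_
  filter_upwards [ev_half] with t ⟨h0, ht⟩
  rw [perDeficit_eq ht]

lemma fk_lim (n : ℕ) {j : ℝ} (hj : 0 < j) (h0 : gB (((n+2:ℕ):ℝ) / 2 - 1) (j^2/4) = 0)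
    (h1 : ∀ z ∈ Ico 0 (j^2/4), 0 < gB (((n+2:ℕ):ℝ) / 2 - 1) z)
    (h2 : ∀ z ∈ Icc 0 (j^2/4), 0 < gB (((n+2:ℕ):ℝ) / 2) z) :
    Tendsto (fun t => fkDeficit (n+2) (Eset (n+2) t) / t^2) (𝓝[>] 0)
    (𝓝 (2 * (j^2 - (n+2)) / ((n+2)^2 * (n+4)))) := by
  have hz : 0 < j^2/4 := by positivity
  have hN : 2 ≤ n + 2 := by omega
  have hl := eig_asymp hN hz h0 (by
    intro y hy
    have := h2 y hy
    rwa [sub_add_cancel])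
  have h := lim_mul hl (lim_mul (Rt_lim n) (Rt_lim n))
  have e : cm (((n+2:ℕ):ℝ) / 2 - 1 + 1) (j^2/4) + (1 / (2 * ((n:ℝ)+2)) + 1 / (2 * ((n:ℝ)+2))) =
      2 * (j^2 - (n+2)) / ((n+2)^2 * (n+4)) := by
    rw [sub_add_cancel, cm]
    push_cast
    have : ((n:ℝ)+2)/2 + 1 = (n+4)/2 := by ring
    rw [this]
    field_simp
    ring
  rw [e] at h
  refine h.congr' ?_
  filter_upwards [ev_half] with t ⟨h0', ht⟩
  have hR := Rt_pos (n := n) ht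
  rw [fkDeficit, sharp_Eset ht, eig_ball hN hz h0 h1 hR]
  congr 2
  field_simp

noncomputable def smoothConv (N : ℕ) (δ : ℝ) (hδ : 0 < δ) (hδ2 : δ ≤ 1/2) :
    SmoothlyConverges N (Eset N) (ball 0 1) where
  δ := δ
  δ_pos := hδ
  Φ t := Tm N t
  Φinv t := Wm N t
  left_inv t ht := WT (by rw [abs_of_nonneg ht.1]; linarith [ht.2])
  right_inv t ht := TW (by rw [abs_of_nonneg ht.1]; linarith [ht.2])
  smooth_x t _ := (LinearMap.toContinuousLinearMap (Tm N t)).contDiff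
  smooth_x_inv t _ := (LinearMap.toContinuousLinearMap (Wm N t)).contDiff
  smooth_t x := by
    rw [contDiffOn_euclidean]
    intro i t ht
    have ht' : |t| ≤ 1/2 := by rw [abs_of_nonneg ht.1]; linarith [ht.2]
    have h1 : ContDiffAt ℝ (⊤ : ℕ∞) (fun t : ℝ => (√(1 + t * eps i))⁻¹ * x i) t := by
      apply ContDiffAt.mul _ contDiffAt_const
      apply ContDiffAt.inv
      · apply ContDiffAt.sqrt (by fun_prop)
        linarith [(one_add_pos ht' i).1]
      · exact (cf_pos ht' i).ne'
    exact h1.contDiffWithinAt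
  smooth_t_inv x := by
    rw [contDiffOn_euclidean]
    intro i t ht
    have ht' : |t| ≤ 1/2 := by rw [abs_of_nonneg ht.1]; linarith [ht.2]
    have h1 : ContDiffAt ℝ (⊤ : ℕ∞) (fun t : ℝ => √(1 + t * eps i) * x i) t := by
      apply ContDiffAt.mul _ contDiffAt_const
      apply ContDiffAt.sqrt (by fun_prop)
      linarith [(one_add_pos ht' i).1]
    exact h1.contDiffWithinAt
  init := by
    ext x
    simp [Eset]
  image t ht := (Eset_eq_image (by rw [abs_of_nonneg ht.1]; linarith [ht.2])).symm

/-- **Theorem 1.2 (optimality).**  For `N ≥ 2` there is a one-parameter family of open bounded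
sets of `ℝ^N` smoothly converging to the unit ball, with positive deficits for small `t > 0`,
along which `δP(Ω(t))/δλ(Ω(t)) → C_N`; hence the constant `C_N` is optimal. -/
theorem faber_krahn_deficit_constant_optimal (N : ℕ) (hN : 2 ≤ N) :
    ∃ (Ωf : ℝ → Set (euc N)) (h : SmoothlyConverges N Ωf (ball (0 : euc N) 1)),
      (∀ t ∈ Ico (0 : ℝ) h.δ, IsOpen (Ωf t)) ∧
      (∀ t ∈ Ico (0 : ℝ) h.δ, Bornology.IsBounded (Ωf t)) ∧
      (∀ t ∈ Ioo (0 : ℝ) h.δ, 0 < perDeficit N (Ωf t)) ∧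
      (∀ t ∈ Ioo (0 : ℝ) h.δ, 0 < fkDeficit N (Ωf t)) ∧
      Tendsto (fun t => perDeficit N (Ωf t) / fkDeficit N (Ωf t)) (𝓝[>] (0 : ℝ))
        (𝓝 (CN N)) := by
  obtain ⟨j, hj, h0, h1, h2, hjN, hC⟩ := bessel_pack N hN
  obtain ⟨n, rfl⟩ : ∃ n, N = n + 2 := ⟨N - 2, by omega⟩
  have hP := per_lim n
  have hF := fk_lim n hj h0 h1 h2
  have hjn : (0:ℝ) < j^2 - (n+2) := by push_cast at hjN; linarith
  have eP := hP.eventually_const_lt (show (0:ℝ) < (n+3) / (2 * (n+2) * (n+4)) by positivity)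
  have eF := hF.eventually_const_lt (show (0:ℝ) < 2 * (j^2 - (n+2)) / ((n+2)^2 * (n+4)) by positivity)
  obtain ⟨δ, hδ, hsub⟩ := (mem_nhdsGT_iff_exists_Ioo_subset).1 (eP.and eF)
  have hδ' : 0 < min δ (1/2) := lt_min hδ (by norm_num)
  have hpos : ∀ {a t : ℝ}, 0 < t → 0 < a / t^2 → 0 < a := by
    intro a t ht h
    have := mul_pos h (pow_pos ht 2)
    rwa [div_mul_cancel₀ _ (pow_pos ht 2).ne'] at this
  refine ⟨Eset (n+2), smoothConv (n+2) (min δ (1/2)) hδ' (min_le_right _ _), ?_, ?_, ?_, ?_, ?_⟩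
  · exact fun t _ => Eset_open _ t
  · intro t ht
    have h3 : t < min δ (1/2) := ht.2
    apply Eset_bounded
    rw [abs_of_nonneg ht.1]
    exact (h3.trans_le (min_le_right _ _)).le
  · intro t ht
    have h3 : t < min δ (1/2) := ht.2
    exact hpos ht.1 (hsub ⟨ht.1, h3.trans_le (min_le_left _ _)⟩).1
  · intro t ht
    have h3 : t < min δ (1/2) := ht.2
    exact hpos ht.1 (hsub ⟨ht.1, h3.trans_le (min_le_left _ _)⟩).2
  · have hq := hP.div hF (by positivity)
    have e : (((n:ℝ)+3) / (2 * (n+2) * (n+4))) / (2 * (j^2 - (n+2)) / ((n+2)^2 * (n+4))) = CN (n+2) := by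
      rw [hC]
      push_cast
      have := hjn.ne'
      field_simp
      ring
    rw [e] at hq
    refine hq.congr' ?_
    filter_upwards [self_mem_nhdsWithin] with t ht
    have : t ≠ 0 := (mem_Ioi.1 ht).ne'
    simp only [Pi.div_apply]
    rw [div_div_div_cancel_right₀ (pow_ne_zero 2 this)]
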